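/- Let d ≥ 1, set s_d = d(d+1)/2, and let g be a smooth Riemannian metric on an open set Ω ⊆ ℝ^d containing a point p. Then there exist an open neighborhood U of p with U ⊆ Ω and an injective smooth map u : U → ℝ^{s_d + d} with (∇u(x))ᵀ ∇u(x) = g(x) for all x ∈ U; that is, every smooth d-dimensional metric admits a smooth local isometric embedding in ℝ^{s_d + d}. (Gromov–Rokhlin; Greene, 1970.) -/

import Mathlib

noncomputable section
open Matrix Set

attribute [local instance] Matrix.normedAddCommGroup Matrix.normedSpace

/-- The Jacobian matrix (n×d) of a map `u : ℝᵈ → ℝⁿ` at a point `x`. -/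
def Jac {d n : ℕ} (u : EuclideanSpace ℝ (Fin d) → EuclideanSpace ℝ (Fin n))
    (x : EuclideanSpace ℝ (Fin d)) : Matrix (Fin n) (Fin d) ℝ :=
  Matrix.of fun i j => fderiv ℝ u x (EuclideanSpace.single j 1) i

/-!
The smooth map `u₀ = (A x - cubic, ½ ℓ_κ²)`, where `Aᵀ A = g p` and `ℓ_κ` is the sum of the
coordinates in the unordered pair `κ`, is free at the origin: its first and second derivatives form
a square invertible matrix. The cubic term makes the induced metric constant up to an error that is
homogeneous of degree four. Cutting this error off at radius `ρ` leaves a perturbation of size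
`ρ ^ 4 ρ⁻²` in a norm of order two, and replacing `g` by `x ↦ g (p + ε x)` makes the remaining
perturbation `g (p + ε x) - g p` small as well. What is left is to solve

  `∂ᵢ u₀ · ∂ⱼ v + ∂ⱼ u₀ · ∂ᵢ v + ∂ᵢ v · ∂ⱼ v = hᵢⱼ`

for a small right-hand side. Günther's observation is that applying `(1 - Δ)⁻¹` to the products of
derivatives gives `∂ₖ v · ∂ₗ v = Nₖₗ - ∂ₖ Tₗ - ∂ₗ Tₖ` with quadratic operators `T` and `N` that
lose no derivatives. Since `u₀` is free, the equation then becomes a fixed point problem for a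
contraction, with no need for the Nash-Moser iteration.

Smoothness of the solution is obtained in the norms `∫ (1 + |ξ|)² (1 + t |ξ|) ^ s |f̂ ξ| dξ`. As
`t → 0` they tend to the norm with `s = 0`, so smallness of `h` in that single norm yields, for each
`s` and some `t`, convergence of the iteration, and hence convergence in every `C^k`.
-/

namespace LocalIsometry

open MeasureTheory SchwartzMap FourierTransform LineDeriv Laplacian Filter Topology
open scoped ComplexConjugate NNReal ContDiff

/-! ### Submultiplicative weights -/

section Weight

variable {V : Type*} [NormedAddCommGroup V]

/-- The weight `(1 + |ξ|) ^ a (1 + t |ξ|) ^ s` on frequencies. The first factor measures a fixed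
number of derivatives; the second one measures `s` further derivatives at length scale `t`, so that
its influence disappears as `t → 0`. -/
def weight (a : ℕ) (t : ℝ≥0) (s : ℕ) (ξ : V) : ℝ := (1 + ‖ξ‖) ^ a * (1 + t * ‖ξ‖) ^ s

lemma weight_nonneg (a : ℕ) (t : ℝ≥0) (s : ℕ) (ξ : V) : 0 ≤ weight a t s ξ := by
  unfold weight; positivity

lemma weight_neg (a : ℕ) (t : ℝ≥0) (s : ℕ) (ξ : V) : weight a t s (-ξ) = weight a t s ξ := by
  simp [weight]

lemma weight_add_le (a : ℕ) (t : ℝ≥0) (s : ℕ) (ξ η : V) :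
    weight a t s (ξ + η) ≤ weight a t s ξ * weight a t s η := by
  have one_add_mul_norm_add_le (r : ℝ≥0) :
      1 + r * ‖ξ + η‖ ≤ (1 + r * ‖ξ‖) * (1 + r * ‖η‖) := by
    have : (r : ℝ) * ‖ξ + η‖ ≤ r * (‖ξ‖ + ‖η‖) := by gcongr; exact norm_add_le ξ η
    have : 0 ≤ (r * ‖ξ‖) * (r * ‖η‖) := by positivity
    linarith
  calc weight a t s (ξ + η)
      ≤ ((1 + ‖ξ‖) * (1 + ‖η‖)) ^ a * ((1 + t * ‖ξ‖) * (1 + t * ‖η‖)) ^ s := by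
        unfold weight
        gcongr
        · simpa using one_add_mul_norm_add_le 1
        · exact one_add_mul_norm_add_le t
    _ = weight a t s ξ * weight a t s η := by simp only [weight, mul_pow]; ring

lemma weight_le (a : ℕ) (t : ℝ≥0) (s : ℕ) (ξ : V) :
    weight a t s ξ ≤ (1 + t) ^ s * (1 + ‖ξ‖) ^ (a + s) := by
  calc weight a t s ξ ≤ (1 + ‖ξ‖) ^ a * ((1 + t) * (1 + ‖ξ‖)) ^ s := by
        unfold weight
        gcongr
        nlinarith [norm_nonneg ξ, t.2]
    _ = (1 + t) ^ s * (1 + ‖ξ‖) ^ (a + s) := by rw [mul_pow, pow_add]; ring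

lemma weight_mono {a b : ℕ} (hab : a ≤ b) {t t' : ℝ≥0} (ht : t ≤ t') (s : ℕ) (ξ : V) :
    weight a t s ξ ≤ weight b t' s ξ := by
  unfold weight
  gcongr
  linarith [norm_nonneg ξ]

@[fun_prop]
lemma continuous_weight (a : ℕ) (t : ℝ≥0) (s : ℕ) : Continuous (weight (V := V) a t s) := by
  unfold weight; fun_prop

lemma tendsto_weight (a s : ℕ) (ξ : V) :
    Tendsto (fun t => weight a t s ξ) (𝓝 0) (𝓝 (weight a 0 0 ξ)) := by
  have : Continuous fun t : ℝ≥0 => weight a t s ξ := by unfold weight; fun_prop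
  simpa [weight] using this.tendsto 0

end Weight

/-! ### The Fourier transform of real Schwartz functions -/

section RealFourier

variable {V F G : Type*} [NormedAddCommGroup V] [InnerProductSpace ℝ V]
  [NormedAddCommGroup F] [NormedSpace ℝ F] [NormedAddCommGroup G] [NormedSpace ℝ G]

/-- The pointwise product of real Schwartz functions, as a bilinear map. -/
def mulₗ : 𝓢(V, ℝ) →ₗ[ℝ] 𝓢(V, ℝ) →ₗ[ℝ] 𝓢(V, ℝ) :=
  ContinuousLinearMap.coeLM ℝ ∘ₗ pairing (ContinuousLinearMap.mul ℝ ℝ)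

@[simp] lemma mulₗ_apply (f g : 𝓢(V, ℝ)) (x : V) : mulₗ f g x = f x * g x := rfl

lemma lineDerivOp_postcompCLM (L : F →L[ℝ] G) (m : V) (f : 𝓢(V, F)) :
    ∂_{m} (postcompCLM L f) = postcompCLM L (∂_{m} f) := by
  ext x
  rw [lineDerivOp_apply_eq_fderiv, postcompCLM_apply, lineDerivOp_apply_eq_fderiv]
  exact DFunLike.congr_fun (L.hasFDerivAt.comp x (f.hasFDerivAt x)).fderiv m

lemma lineDerivOp_mulₗ (m : V) (f g : 𝓢(V, ℝ)) :
    ∂_{m} (mulₗ f g) = mulₗ (∂_{m} f) g + mulₗ f (∂_{m} g) := by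
  ext x
  have := DFunLike.congr_fun ((f.hasFDerivAt x).mul (g.hasFDerivAt x)).fderiv m
  simp only [_root_.add_apply, mulₗ_apply, lineDerivOp_apply_eq_fderiv]
  refine Eq.trans this ?_
  simp only [_root_.add_apply, _root_.smul_apply, smul_eq_mul]
  ring

/-- The Fourier symbol of `(1 - Δ)⁻¹`. -/
def oneSubLaplacianInvSymbol (ξ : V) : ℝ := (1 + (2 * Real.pi) ^ 2 * ‖ξ‖ ^ 2)⁻¹

lemma oneSubLaplacianInvSymbol_hasTemperateGrowth :
    (oneSubLaplacianInvSymbol (V := V)).HasTemperateGrowth := by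
  have : oneSubLaplacianInvSymbol (V := V) =
      (fun ξ => (1 + ‖ξ‖ ^ 2) ^ (-1 : ℝ)) ∘ ((2 * Real.pi) • ContinuousLinearMap.id ℝ V) := by
    ext ξ
    simp [oneSubLaplacianInvSymbol, Real.rpow_neg_one, norm_smul, mul_pow]
  rw [this]
  exact (Function.hasTemperateGrowth_one_add_norm_sq_rpow V (-1)).comp
    (ContinuousLinearMap.hasTemperateGrowth _)

variable [FiniteDimensional ℝ V] [MeasurableSpace V] [BorelSpace V]

lemma fourier_fourier_apply (f : 𝓢(V, ℂ)) (x : V) : 𝓕 (𝓕 f) x = f (-x) := by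
  have : 𝓕⁻ (𝓕 f) (-x) = 𝓕 (𝓕 f) x := by
    rw [fourierInv_apply_eq]; simp
  rw [← this, FourierTransform.fourierInv_fourier_eq]

lemma fourier_injective : Function.Injective (𝓕 : 𝓢(V, ℂ) → 𝓢(V, ℂ)) :=
  Function.LeftInverse.injective FourierTransform.fourierInv_fourier_eq

lemma fourier_pairing_mul (f g : 𝓢(V, ℂ)) :
    𝓕 (pairing (ContinuousLinearMap.mul ℂ ℂ) f g) =
      SchwartzMap.convolution (ContinuousLinearMap.mul ℂ ℂ) (𝓕 f) (𝓕 g) := by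
  apply fourier_injective
  ext x
  simp [fourier_convolution, fourier_fourier_apply]

lemma fourier_conj_apply (f : 𝓢(V, ℂ)) (ξ : V) :
    𝓕 (postcompCLM (Complex.conjCLE : ℂ →L[ℝ] ℂ) f) ξ = conj (𝓕 f (-ξ)) := by
  simp only [fourier_coe, Real.fourier_eq, ← integral_conj]
  congr 1 with v
  simp only [postcompCLM_apply, Circle.smul_def, smul_eq_mul, map_mul, ← Circle.coe_inv_eq_conj,
    ← AddChar.map_neg_eq_inv]
  simp

/-- The Fourier transform of a real-valued Schwartz function. -/
def realFourier : 𝓢(V, ℝ) →L[ℝ] 𝓢(V, ℂ) :=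
  fourierCLM ℝ 𝓢(V, ℂ) ∘L postcompCLM Complex.ofRealCLM

lemma realFourier_apply (f : 𝓢(V, ℝ)) : realFourier f = 𝓕 (postcompCLM Complex.ofRealCLM f) := rfl

lemma realFourier_injective : Function.Injective (realFourier (V := V)) := by
  intro f g hfg
  have := fourier_injective hfg
  ext x
  simpa using DFunLike.congr_fun this x

lemma realFourier_lineDerivOp_apply (m : V) (f : 𝓢(V, ℝ)) (ξ : V) :
    realFourier (∂_{m} f) ξ = (2 * Real.pi * Complex.I * inner ℝ ξ m) * realFourier f ξ := by
  have hm : (inner ℝ · m : V → ℝ).HasTemperateGrowth := by fun_prop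
  rw [realFourier_apply, ← lineDerivOp_postcompCLM, fourier_lineDerivOp_eq, _root_.smul_apply,
    smulLeftCLM_apply_apply hm, realFourier_apply, smul_eq_mul, Complex.real_smul]
  ring

lemma realFourier_laplacian_apply (f : 𝓢(V, ℝ)) (ξ : V) :
    realFourier (Δ f) ξ = (-((2 * Real.pi) ^ 2 * ‖ξ‖ ^ 2) : ℝ) * realFourier f ξ := by
  set b := stdOrthonormalBasis ℝ V
  rw [laplacian_eq_sum b, map_sum, _root_.sum_apply, ← b.sum_sq_inner_left]
  simp only [realFourier_lineDerivOp_apply, ← mul_assoc, ← Finset.sum_mul]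
  congr 1
  push_cast
  rw [Finset.mul_sum, ← Finset.sum_neg_distrib]
  refine Finset.sum_congr rfl fun k _ => ?_
  linear_combination (4 * Real.pi ^ 2 * inner ℝ ξ (b k) ^ 2 : ℂ) * Complex.I_sq

lemma realFourier_mulₗ (f g : 𝓢(V, ℝ)) :
    realFourier (mulₗ f g) = SchwartzMap.convolution (ContinuousLinearMap.mul ℂ ℂ)
      (realFourier f) (realFourier g) := by
  simp only [realFourier_apply, ← fourier_pairing_mul]
  congr 1
  ext x
  simp

/-- The operator `(1 - Δ)⁻¹`. It is a Fourier multiplier on complex-valued functions whose symbol is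
real and even, so that taking the real part at the end loses nothing. -/
def oneSubLaplacianInv : 𝓢(V, ℝ) →L[ℝ] 𝓢(V, ℝ) :=
  postcompCLM Complex.reCLM ∘L
    (fourierMultiplierCLM ℂ (oneSubLaplacianInvSymbol (V := V)) ∘L postcompCLM Complex.ofRealCLM)

lemma realFourier_oneSubLaplacianInv_apply (f : 𝓢(V, ℝ)) (ξ : V) :
    realFourier (oneSubLaplacianInv f) ξ = oneSubLaplacianInvSymbol ξ * realFourier f ξ := by
  set F : 𝓢(V, ℂ) := postcompCLM Complex.ofRealCLM f
  set w := fourierMultiplierCLM ℂ (oneSubLaplacianInvSymbol (V := V)) F with hw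
  have fourier_w (η : V) : 𝓕 w η = oneSubLaplacianInvSymbol η * 𝓕 F η := by
    rw [hw, fourierMultiplierCLM_apply, FourierTransform.fourier_fourierInv_eq,
      smulLeftCLM_apply_apply oneSubLaplacianInvSymbol_hasTemperateGrowth, Complex.real_smul]
  have conj_F : postcompCLM (Complex.conjCLE : ℂ →L[ℝ] ℂ) F = F := by ext x; simp [F]
  have conj_w : postcompCLM (Complex.conjCLE : ℂ →L[ℝ] ℂ) w = w := by
    apply fourier_injective
    ext η
    rw [fourier_conj_apply, fourier_w, fourier_w, map_mul, Complex.conj_ofReal,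
      ← fourier_conj_apply, conj_F]
    simp [oneSubLaplacianInvSymbol]
  have ofReal_re_w : postcompCLM Complex.ofRealCLM (postcompCLM Complex.reCLM w) = w := by
    ext x
    exact Complex.conj_eq_iff_re.1 (DFunLike.congr_fun conj_w x)
  change 𝓕 (postcompCLM Complex.ofRealCLM (postcompCLM Complex.reCLM w)) ξ = _
  rw [ofReal_re_w, fourier_w, realFourier_apply]

lemma lineDerivOp_oneSubLaplacianInv (m : V) (f : 𝓢(V, ℝ)) :
    ∂_{m} (oneSubLaplacianInv f) = oneSubLaplacianInv (∂_{m} f) := by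
  apply realFourier_injective
  ext ξ
  simp only [realFourier_lineDerivOp_apply, realFourier_oneSubLaplacianInv_apply]
  ring

lemma oneSubLaplacianInv_sub_laplacian (f : 𝓢(V, ℝ)) : oneSubLaplacianInv (f - Δ f) = f := by
  apply realFourier_injective
  ext ξ
  have : (1 + (2 * Real.pi) ^ 2 * ‖ξ‖ ^ 2 : ℂ) ≠ 0 := by
    exact_mod_cast (show (1 + (2 * Real.pi) ^ 2 * ‖ξ‖ ^ 2 : ℝ) ≠ 0 by positivity)
  simp only [realFourier_oneSubLaplacianInv_apply, map_sub, _root_.sub_apply,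
    realFourier_laplacian_apply, oneSubLaplacianInvSymbol]
  push_cast
  linear_combination realFourier f ξ * inv_mul_cancel₀ this

end RealFourier

/-! ### Wiener seminorms -/

section WienerSeminorm

variable {V : Type*} [NormedAddCommGroup V] [InnerProductSpace ℝ V]

/-- A continuous seminorm on Schwartz functions that controls `weight a t s * ‖f ·‖` up to an
integrable factor. -/
def weightedSupSeminorm (a s : ℕ) : Seminorm ℝ 𝓢(V, ℂ) :=
  (Finset.Iic (a + s + (Module.finrank ℝ V + 1), 0)).sup (schwartzSeminormFamily ℝ V ℂ)

lemma weight_mul_norm_le (a : ℕ) (t : ℝ≥0) (s : ℕ) (f : 𝓢(V, ℂ)) (ξ : V) :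
    weight a t s ξ * ‖f ξ‖ ≤
      (1 + ‖ξ‖) ^ (-(Module.finrank ℝ V + 1 : ℕ) : ℝ) *
        ((1 + t) ^ s * 2 ^ (a + s + (Module.finrank ℝ V + 1)) * weightedSupSeminorm a s f) := by
  set r := Module.finrank ℝ V + 1
  have one_add_pow_mul_norm_le : (1 + ‖ξ‖) ^ (a + s + r) * ‖f ξ‖ ≤
      2 ^ (a + s + r) * weightedSupSeminorm a s f := by
    rw [← norm_iteratedFDeriv_zero (𝕜 := ℝ) (f := f)]
    exact one_add_le_sup_seminorm_apply (𝕜 := ℝ) (m := (a + s + r, 0)) le_rfl le_rfl f ξ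
  have pos : 0 < 1 + ‖ξ‖ := by positivity
  rw [Real.rpow_neg pos.le, Real.rpow_natCast, inv_mul_eq_div, le_div_iff₀ (by positivity)]
  calc weight a t s ξ * ‖f ξ‖ * (1 + ‖ξ‖) ^ r
      ≤ (1 + t) ^ s * (1 + ‖ξ‖) ^ (a + s) * ‖f ξ‖ * (1 + ‖ξ‖) ^ r := by
        gcongr
        exact weight_le a t s ξ
    _ = (1 + t) ^ s * ((1 + ‖ξ‖) ^ (a + s + r) * ‖f ξ‖) := by rw [pow_add _ (a + s)]; ring
    _ ≤ (1 + t) ^ s * (2 ^ (a + s + r) * weightedSupSeminorm a s f) := by gcongr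
    _ = _ := by ring

variable [FiniteDimensional ℝ V] [MeasurableSpace V] [BorelSpace V]

lemma integrable_weight_mul_norm (a : ℕ) (t : ℝ≥0) (s : ℕ) (f : 𝓢(V, ℂ)) :
    Integrable (fun ξ => weight a t s ξ * ‖f ξ‖) := by
  have integrable_rpow :
      Integrable (fun ξ : V => (1 + ‖ξ‖) ^ (-(Module.finrank ℝ V + 1 : ℕ) : ℝ)) :=
    integrable_one_add_norm (by simp)
  refine (integrable_rpow.mul_const
    ((1 + t) ^ s * 2 ^ (a + s + (Module.finrank ℝ V + 1)) * weightedSupSeminorm a s f)).mono'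
    ((continuous_weight a t s).mul f.continuous.norm).aestronglyMeasurable
    (ae_of_all _ fun ξ => ?_)
  rw [Real.norm_of_nonneg (mul_nonneg (weight_nonneg a t s ξ) (norm_nonneg _))]
  exact weight_mul_norm_le a t s f ξ

/-- The seminorm `∫ (1 + |ξ|) ^ a (1 + t |ξ|) ^ s |f̂ ξ| dξ` on real Schwartz functions. -/
def wienerSeminorm (a : ℕ) (t : ℝ≥0) (s : ℕ) : Seminorm ℝ 𝓢(V, ℝ) :=
  Seminorm.of (fun f => ∫ ξ, weight a t s ξ * ‖realFourier f ξ‖)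
    (fun f g => by
      rw [← integral_add (integrable_weight_mul_norm a t s _) (integrable_weight_mul_norm a t s _)]
      refine integral_mono (integrable_weight_mul_norm a t s _)
        ((integrable_weight_mul_norm a t s _).add (integrable_weight_mul_norm a t s _)) fun ξ => ?_
      simp only [map_add, _root_.add_apply, ← mul_add]
      exact mul_le_mul_of_nonneg_left (norm_add_le _ _) (weight_nonneg a t s ξ))
    (fun c f => by
      simp only [map_smul, _root_.smul_apply, norm_smul, mul_left_comm _ ‖c‖, integral_const_mul])

lemma wienerSeminorm_apply (a : ℕ) (t : ℝ≥0) (s : ℕ) (f : 𝓢(V, ℝ)) :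
    wienerSeminorm a t s f = ∫ ξ, weight a t s ξ * ‖realFourier f ξ‖ := rfl

lemma wienerSeminorm_le_of_norm_le {a b : ℕ} (t : ℝ≥0) (s : ℕ) {c : ℝ} {f g : 𝓢(V, ℝ)}
    (h : ∀ ξ, (1 + ‖ξ‖) ^ a * ‖realFourier f ξ‖ ≤ c * ((1 + ‖ξ‖) ^ b * ‖realFourier g ξ‖)) :
    wienerSeminorm a t s f ≤ c * wienerSeminorm b t s g := by
  simp only [wienerSeminorm_apply]
  rw [← integral_const_mul]
  refine integral_mono (integrable_weight_mul_norm a t s _)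
    ((integrable_weight_mul_norm b t s _).const_mul c) fun ξ => ?_
  calc weight a t s ξ * ‖realFourier f ξ‖
      = (1 + t * ‖ξ‖) ^ s * ((1 + ‖ξ‖) ^ a * ‖realFourier f ξ‖) := by unfold weight; ring
    _ ≤ (1 + t * ‖ξ‖) ^ s * (c * ((1 + ‖ξ‖) ^ b * ‖realFourier g ξ‖)) := by
        gcongr ?_ * ?_
        exact h ξ
    _ = c * (weight b t s ξ * ‖realFourier g ξ‖) := by unfold weight; ring

lemma wienerSeminorm_mono {a b : ℕ} (hab : a ≤ b) (t : ℝ≥0) (s : ℕ) (f : 𝓢(V, ℝ)) :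
    wienerSeminorm a t s f ≤ wienerSeminorm b t s f :=
  integral_mono (integrable_weight_mul_norm a t s _) (integrable_weight_mul_norm b t s _)
    fun ξ => mul_le_mul_of_nonneg_right (weight_mono hab le_rfl s ξ) (norm_nonneg _)

-- Submultiplicativity of the weight turns this into Young's inequality `‖F ⋆ G‖₁ ≤ ‖F‖₁ ‖G‖₁`.
lemma wienerSeminorm_mulₗ_le (a : ℕ) (t : ℝ≥0) (s : ℕ) (f g : 𝓢(V, ℝ)) :
    wienerSeminorm a t s (mulₗ f g) ≤ wienerSeminorm a t s f * wienerSeminorm a t s g := by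
  let F (h : 𝓢(V, ℝ)) (ξ : V) : ℝ := weight a t s ξ * ‖realFourier h ξ‖
  have integrable_F (h : 𝓢(V, ℝ)) : Integrable (F h) := integrable_weight_mul_norm a t s _
  have weight_mul_norm_mul_le (ξ η : V) : weight a t s ξ *
      ‖realFourier f η * realFourier g (ξ - η)‖ ≤ F f η * F g (ξ - η) := by
    calc _ ≤ (weight a t s η * weight a t s (ξ - η)) *
          (‖realFourier f η‖ * ‖realFourier g (ξ - η)‖) := by
          rw [norm_mul]
          gcongr
          simpa using weight_add_le a t s η (ξ - η)
      _ = F f η * F g (ξ - η) := by simp only [F]; ring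
  have integral_mul := integral_convolution (ContinuousLinearMap.mul ℝ ℝ) (μ := volume)
    (ν := volume) (integrable_F f) (integrable_F g)
  simp only [wienerSeminorm_apply]
  refine le_of_le_of_eq ?_ integral_mul
  refine integral_mono_ae (integrable_F _)
    ((integrable_F f).integrable_convolution (ContinuousLinearMap.mul ℝ ℝ) (integrable_F g)) ?_
  filter_upwards [(integrable_F f).ae_convolution_exists (ContinuousLinearMap.mul ℝ ℝ)
    (integrable_F g)] with ξ hξ
  rw [realFourier_mulₗ, SchwartzMap.convolution_apply]
  calc weight a t s ξ * ‖∫ η, realFourier f η * realFourier g (ξ - η)‖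
      ≤ weight a t s ξ * ∫ η, ‖realFourier f η * realFourier g (ξ - η)‖ :=
        mul_le_mul_of_nonneg_left (norm_integral_le_integral_norm _) (weight_nonneg a t s ξ)
    _ = ∫ η, weight a t s ξ * ‖realFourier f η * realFourier g (ξ - η)‖ :=
        (integral_const_mul _ _).symm
    _ ≤ ∫ η, F f η * F g (ξ - η) := integral_mono_of_nonneg
        (ae_of_all _ fun η => mul_nonneg (weight_nonneg a t s ξ) (norm_nonneg _)) hξ
        (ae_of_all _ (weight_mul_norm_mul_le ξ))

lemma wienerSeminorm_lineDerivOp_le (a : ℕ) (t : ℝ≥0) (s : ℕ) (m : V) (f : 𝓢(V, ℝ)) :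
    wienerSeminorm a t s (∂_{m} f) ≤ 2 * Real.pi * ‖m‖ * wienerSeminorm (a + 1) t s f := by
  refine wienerSeminorm_le_of_norm_le t s fun ξ => ?_
  have norm_symbol_le : ‖(2 * Real.pi * Complex.I * inner ℝ ξ m : ℂ)‖ ≤
      2 * Real.pi * (‖m‖ * (1 + ‖ξ‖)) := by
    simp only [norm_mul, Complex.norm_ofNat, Complex.norm_real, Complex.norm_I, mul_one,
      Real.norm_of_nonneg Real.pi_pos.le]
    gcongr
    nlinarith [norm_inner_le_norm (𝕜 := ℝ) ξ m, norm_nonneg m]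
  rw [realFourier_lineDerivOp_apply, norm_mul]
  calc _ ≤ (1 + ‖ξ‖) ^ a * (2 * Real.pi * (‖m‖ * (1 + ‖ξ‖)) * ‖realFourier f ξ‖) := by gcongr
    _ = _ := by ring

lemma wienerSeminorm_oneSubLaplacianInv_le (t : ℝ≥0) (s : ℕ) (f : 𝓢(V, ℝ)) :
    wienerSeminorm 2 t s (oneSubLaplacianInv f) ≤ 2 * wienerSeminorm 0 t s f := by
  refine wienerSeminorm_le_of_norm_le t s fun ξ => ?_
  have sq_mul_symbol_le : (1 + ‖ξ‖) ^ 2 * oneSubLaplacianInvSymbol ξ ≤ 2 := by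
    have : 1 ≤ (2 * Real.pi) ^ 2 := by nlinarith [Real.pi_gt_three]
    rw [oneSubLaplacianInvSymbol, mul_inv_le_iff₀ (by positivity)]
    nlinarith [sq_nonneg (‖ξ‖ - 1), sq_nonneg ‖ξ‖]
  have symbol_nonneg : 0 ≤ oneSubLaplacianInvSymbol ξ := by
    unfold oneSubLaplacianInvSymbol; positivity
  rw [realFourier_oneSubLaplacianInv_apply, norm_mul, Complex.norm_real,
    Real.norm_of_nonneg symbol_nonneg, ← mul_assoc, pow_zero, one_mul]
  gcongr

lemma tendsto_wienerSeminorm (a s : ℕ) (f : 𝓢(V, ℝ)) :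
    Tendsto (fun t => wienerSeminorm a t s f) (𝓝 0) (𝓝 (wienerSeminorm a 0 0 f)) := by
  refine tendsto_integral_filter_of_dominated_convergence
    (fun ξ => weight a 1 s ξ * ‖realFourier f ξ‖) ?_ ?_ (integrable_weight_mul_norm a 1 s _) ?_
  · exact Eventually.of_forall fun t =>
      ((continuous_weight a t s).mul (realFourier f).continuous.norm).aestronglyMeasurable
  · filter_upwards [Iic_mem_nhds zero_lt_one] with t ht
    refine ae_of_all _ fun ξ => ?_
    rw [Real.norm_of_nonneg (mul_nonneg (weight_nonneg a t s ξ) (norm_nonneg _))]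
    exact mul_le_mul_of_nonneg_right (weight_mono le_rfl ht s ξ) (norm_nonneg _)
  · exact ae_of_all _ fun ξ => (tendsto_weight a s ξ).mul_const _

lemma continuous_wienerSeminorm (a : ℕ) (t : ℝ≥0) (s : ℕ) :
    Continuous (wienerSeminorm (V := V) a t s) := by
  let r : ℕ := Module.finrank ℝ V + 1
  let C : ℝ := ∫ ξ : V, (1 + ‖ξ‖) ^ (-(r : ℝ))
  have : 0 ≤ C := integral_nonneg fun ξ => by positivity
  have le_weightedSupSeminorm (f : 𝓢(V, ℝ)) : wienerSeminorm a t s f ≤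
      C * ((1 + t) ^ s * 2 ^ (a + s + r)) * weightedSupSeminorm a s (realFourier f) := by
    rw [mul_assoc, ← integral_mul_const]
    exact integral_mono (integrable_weight_mul_norm a t s _)
      ((integrable_one_add_norm (by simp [r])).mul_const _) (weight_mul_norm_le a t s _)
  let K : ℝ≥0 := ⟨C * ((1 + t) ^ s * 2 ^ (a + s + r)), by positivity⟩
  have continuous_sup : Continuous (weightedSupSeminorm (V := V) a s) :=
    Seminorm.continuous_finsetSup fun m _ =>
      (schwartz_withSeminorms ℝ V ℂ).continuous_seminorm m
  refine Seminorm.continuous_of_le (q := K • (weightedSupSeminorm a s).comp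
    (realFourier (V := V)).toLinearMap) ?_ le_weightedSupSeminorm
  exact (continuous_sup.comp realFourier.continuous).const_smul K

lemma realFourier_apply_of_dilation {ρ : ℝ} (hρ : 0 < ρ) {f g : 𝓢(V, ℝ)}
    (hfg : ∀ x, g x = f (ρ⁻¹ • x)) (ξ : V) :
    realFourier g ξ = (ρ ^ Module.finrank ℝ V : ℝ) • realFourier f (ρ • ξ) := by
  simp only [realFourier_apply, fourier_coe, Real.fourier_eq']
  rw [← Measure.integral_comp_inv_smul_of_nonneg volume _ hρ.le]
  congr 1 with x
  simp only [postcompCLM_apply, hfg, inner_smul_left, inner_smul_right, RCLike.conj_to_real,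
    mul_inv_cancel_left₀ hρ.ne']

lemma wienerSeminorm_le_of_dilation (a : ℕ) {ρ : ℝ} (hρ : 0 < ρ) (hρ1 : ρ ≤ 1) {f g : 𝓢(V, ℝ)}
    (hfg : ∀ x, g x = f (ρ⁻¹ • x)) :
    wienerSeminorm a 0 0 g ≤ (ρ ^ a)⁻¹ * wienerSeminorm a 0 0 f := by
  have one_le_inv : 1 ≤ ρ⁻¹ := (one_le_inv₀ hρ).2 hρ1
  calc wienerSeminorm a 0 0 g
      = ∫ ξ, ρ ^ Module.finrank ℝ V *
          ((1 + ρ⁻¹ * ‖ρ • ξ‖) ^ a * ‖realFourier f (ρ • ξ)‖) := by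
        rw [wienerSeminorm_apply]
        congr 1 with ξ
        rw [realFourier_apply_of_dilation hρ hfg, norm_smul, norm_smul, weight, pow_zero, mul_one,
          Real.norm_of_nonneg hρ.le, Real.norm_of_nonneg (by positivity),
          inv_mul_cancel_left₀ hρ.ne', mul_left_comm]
    _ = ∫ η, (1 + ρ⁻¹ * ‖η‖) ^ a * ‖realFourier f η‖ := by
        rw [integral_const_mul, Measure.integral_comp_smul_of_nonneg volume
          (fun η => (1 + ρ⁻¹ * ‖η‖) ^ a * ‖realFourier f η‖) ρ (hR := hρ.le), smul_eq_mul,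
          mul_inv_cancel_left₀ (pow_ne_zero _ hρ.ne')]
    _ ≤ ∫ η, (ρ ^ a)⁻¹ * (weight a 0 0 η * ‖realFourier f η‖) := by
        refine integral_mono_of_nonneg (ae_of_all _ fun η => by positivity)
          ((integrable_weight_mul_norm a 0 0 _).const_mul _) (ae_of_all _ fun η => ?_)
        simp only [weight, pow_zero, mul_one]
        rw [← mul_assoc, ← inv_pow, ← mul_pow]
        gcongr
        linarith
    _ = (ρ ^ a)⁻¹ * wienerSeminorm a 0 0 f := integral_const_mul _ _

lemma norm_iteratedFDeriv_le_wienerSeminorm {t : ℝ≥0} (ht : 0 < t) (k : ℕ) (f : 𝓢(V, ℝ)) (x : V) :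
    ‖iteratedFDeriv ℝ k f x‖ ≤ (2 * Real.pi / t) ^ k * wienerSeminorm 0 t k f := by
  let H (ξ : V) : ℂ := realFourier f (-ξ)
  have ofReal_f : (fun y => (f y : ℂ)) = 𝓕 H := by
    rw [← Real.fourierInv_eq_fourier_comp_neg, ← fourierInv_coe, realFourier_apply,
      FourierTransform.fourierInv_fourier_eq]
    rfl
  have integrable_moment (n : ℕ) : Integrable (fun v => ‖v‖ ^ n * ‖H v‖) := by
    simpa [H] using ((realFourier f).integrable_pow_mul volume n).comp_neg
  have integrable_weight : Integrable (fun v => weight 0 t k v * ‖H v‖) := by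
    simpa [H, weight_neg] using (integrable_weight_mul_norm 0 t k (realFourier f)).comp_neg
  have norm_integrand_le (v : V) : ‖VectorFourier.fourierPowSMulRight (innerSL ℝ) H v k‖
      ≤ (2 * Real.pi / t) ^ k * (weight 0 t k v * ‖H v‖) := by
    calc _ ≤ (2 * Real.pi * ‖(innerSL ℝ : V →L[ℝ] V →L[ℝ] ℝ)‖) ^ k * ‖v‖ ^ k * ‖H v‖ :=
          VectorFourier.norm_fourierPowSMulRight_le (innerSL ℝ) H v k
      _ ≤ (2 * Real.pi * 1) ^ k * ((1 + t * ‖v‖) / t) ^ k * ‖H v‖ := by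
          gcongr
          · exact norm_innerSL_le ℝ
          · rw [le_div_iff₀ (by positivity)]
            linarith
      _ = _ := by simp only [weight, pow_zero, div_pow, mul_pow]; ring
  have norm_ofReal : ‖iteratedFDeriv ℝ k f x‖ = ‖iteratedFDeriv ℝ k (fun y => (f y : ℂ)) x‖ :=
    (Complex.ofRealLI.norm_iteratedFDeriv_comp_left (f.smooth k).contDiffAt le_rfl).symm
  rw [norm_ofReal, ofReal_f, Real.iteratedFDeriv_fourier (N := k) (fun n _ => integrable_moment n)
    ((realFourier f).continuous.comp continuous_neg).aestronglyMeasurable le_rfl]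
  calc _ ≤ ∫ v, ‖VectorFourier.fourierPowSMulRight (innerSL ℝ) H v k‖ :=
        VectorFourier.norm_fourierIntegral_le_integral_norm _ _ _ _ _
    _ ≤ ∫ v, (2 * Real.pi / t) ^ k * (weight 0 t k v * ‖H v‖) :=
        integral_mono_of_nonneg (ae_of_all _ fun _ => norm_nonneg _)
          (integrable_weight.const_mul _) (ae_of_all _ norm_integrand_le)
    _ = (2 * Real.pi / t) ^ k * wienerSeminorm 0 t k f := by
      rw [integral_const_mul, wienerSeminorm_apply, ← integral_neg_eq_self]
      simp [H, weight_neg]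

end WienerSeminorm

/-! ### Günther's identity -/

section Gunther

variable {V : Type*} [NormedAddCommGroup V] [InnerProductSpace ℝ V]

lemma lineDerivOp_comm (m n : V) (f : 𝓢(V, ℝ)) : ∂_{m} (∂_{n} f) = ∂_{n} (∂_{m} f) := by
  have second_deriv (m n x : V) : ∂_{m} (∂_{n} f) x = fderiv ℝ (fderiv ℝ f) x m n := by
    have : DifferentiableAt ℝ (fderiv ℝ f) x :=
      ((f.smooth 2).fderiv_right (m := 1) (by norm_num)).differentiable (by norm_num) x
    rw [lineDerivOp_apply_eq_fderiv, funext (lineDerivOp_apply_eq_fderiv n f),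
      fderiv_clm_apply this (by fun_prop)]
    simp
  ext x
  rw [second_deriv, second_deriv]
  exact (f.smooth 2).contDiffAt.isSymmSndFDerivAt (by simp) m n

variable [FiniteDimensional ℝ V]

lemma laplacian_mulₗ (f g : 𝓢(V, ℝ)) :
    Δ (mulₗ f g) = mulₗ (Δ f) g + mulₗ f (Δ g) + (2 : ℝ) • ∑ k,
      mulₗ (∂_{stdOrthonormalBasis ℝ V k} f) (∂_{stdOrthonormalBasis ℝ V k} g) := by
  simp only [laplacian_eq_sum (stdOrthonormalBasis ℝ V), lineDerivOp_mulₗ, lineDerivOp_add]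
  ext x
  simp only [_root_.add_apply, _root_.sum_apply, _root_.smul_apply, mulₗ_apply, smul_eq_mul,
    Finset.sum_mul, Finset.mul_sum, ← Finset.sum_add_distrib]
  exact Finset.sum_congr rfl fun k _ => by ring

lemma lineDerivOp_laplacian (m : V) (f : 𝓢(V, ℝ)) : ∂_{m} (Δ f) = Δ (∂_{m} f) := by
  simp only [laplacian_eq_sum (stdOrthonormalBasis ℝ V), ← lineDerivOp_comm m]
  exact map_sum (lineDerivOpCLM ℝ 𝓢(V, ℝ) m) _ _

variable [MeasurableSpace V] [BorelSpace V]

/-- The bilinear operator `(f, g) ↦ (1 - Δ)⁻¹ (A f * B g)`. -/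
def smoothedProduct (A B : 𝓢(V, ℝ) →L[ℝ] 𝓢(V, ℝ)) : 𝓢(V, ℝ) →ₗ[ℝ] 𝓢(V, ℝ) →ₗ[ℝ] 𝓢(V, ℝ) :=
  (mulₗ.compl₁₂ A.toLinearMap B.toLinearMap).compr₂ oneSubLaplacianInv.toLinearMap

/-- The bilinear operator whose value on the diagonal is the tangential part in Günther's splitting
of a product of first derivatives. -/
def tangentialForm (m : V) : 𝓢(V, ℝ) →ₗ[ℝ] 𝓢(V, ℝ) →ₗ[ℝ] 𝓢(V, ℝ) :=
  smoothedProduct (laplacianCLM ℝ V 𝓢(V, ℝ)) (lineDerivOpCLM ℝ 𝓢(V, ℝ) m)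

/-- The bilinear operator whose value on the diagonal is the normal part in Günther's splitting of a
product of first derivatives. -/
def normalForm (m n : V) : 𝓢(V, ℝ) →ₗ[ℝ] 𝓢(V, ℝ) →ₗ[ℝ] 𝓢(V, ℝ) :=
  let D := lineDerivOpCLM ℝ 𝓢(V, ℝ)
  let e := stdOrthonormalBasis ℝ V
  smoothedProduct (D m) (D n) + (2 : ℝ) • smoothedProduct (laplacianCLM ℝ V 𝓢(V, ℝ)) (D m ∘L D n)
    - (2 : ℝ) • ∑ k, smoothedProduct (D (e k) ∘L D m) (D (e k) ∘L D n)

lemma tangentialForm_apply (m : V) (f g : 𝓢(V, ℝ)) :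
    tangentialForm m f g = oneSubLaplacianInv (mulₗ (Δ f) (∂_{m} g)) := rfl

lemma normalForm_apply (m n : V) (f g : 𝓢(V, ℝ)) :
    normalForm m n f g = oneSubLaplacianInv (mulₗ (∂_{m} f) (∂_{n} g) +
      (2 : ℝ) • mulₗ (Δ f) (∂_{m} (∂_{n} g)) -
      (2 : ℝ) • ∑ k, mulₗ (∂_{stdOrthonormalBasis ℝ V k} (∂_{m} f))
        (∂_{stdOrthonormalBasis ℝ V k} (∂_{n} g))) := by
  simp only [map_add, map_sub, map_smul, map_sum]
  simp only [normalForm, LinearMap.add_apply, LinearMap.sub_apply, LinearMap.smul_apply,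
    LinearMap.sum_apply]
  rfl

-- `Δ (∂_m f * ∂_n f)` and `∂_m (Δ f * ∂_n f) + ∂_n (Δ f * ∂_m f)` have the same third order terms.
theorem mulₗ_lineDerivOp_eq (m n : V) (f : 𝓢(V, ℝ)) :
    mulₗ (∂_{m} f) (∂_{n} f) =
      normalForm m n f f - ∂_{m} (tangentialForm n f f) - ∂_{n} (tangentialForm m f f) := by
  have one_sub_laplacian : mulₗ (∂_{m} f) (∂_{n} f) - Δ (mulₗ (∂_{m} f) (∂_{n} f)) =
      (mulₗ (∂_{m} f) (∂_{n} f) + (2 : ℝ) • mulₗ (Δ f) (∂_{m} (∂_{n} f)) -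
        (2 : ℝ) • ∑ k, mulₗ (∂_{stdOrthonormalBasis ℝ V k} (∂_{m} f))
          (∂_{stdOrthonormalBasis ℝ V k} (∂_{n} f))) -
      ∂_{m} (mulₗ (Δ f) (∂_{n} f)) - ∂_{n} (mulₗ (Δ f) (∂_{m} f)) := by
    rw [laplacian_mulₗ, lineDerivOp_mulₗ, lineDerivOp_mulₗ, lineDerivOp_laplacian,
      lineDerivOp_laplacian, lineDerivOp_comm n m]
    ext x
    simp only [_root_.add_apply, _root_.sub_apply, _root_.smul_apply, mulₗ_apply, smul_eq_mul]
    ring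
  rw [← oneSubLaplacianInv_sub_laplacian (mulₗ (∂_{m} f) (∂_{n} f)), one_sub_laplacian, map_sub,
    map_sub, ← normalForm_apply, ← lineDerivOp_oneSubLaplacianInv, ← lineDerivOp_oneSubLaplacianInv,
    ← tangentialForm_apply, ← tangentialForm_apply]

lemma normalForm_comm (m n : V) (f : 𝓢(V, ℝ)) : normalForm m n f f = normalForm n m f f := by
  have mulₗ_comm (g h : 𝓢(V, ℝ)) : mulₗ g h = mulₗ h g := by ext x; exact mul_comm _ _
  simp only [normalForm_apply, lineDerivOp_comm m n, mulₗ_comm (∂_{m} f),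
    mulₗ_comm (∂_{_} (∂_{m} f))]

/-- A linear operator that loses at most two derivatives in the Wiener seminorms, with a constant
that does not depend on the scale `t` and the order `s`. -/
def IsOrderTwo (A : 𝓢(V, ℝ) →L[ℝ] 𝓢(V, ℝ)) : Prop :=
  ∃ C ≥ 0, ∀ t s f, wienerSeminorm 0 t s (A f) ≤ C * wienerSeminorm 2 t s f

/-- A bilinear operator that loses no derivatives in the Wiener seminorms, with a constant that does
not depend on the scale `t` and the order `s`. -/
def IsWienerBounded (B : 𝓢(V, ℝ) →ₗ[ℝ] 𝓢(V, ℝ) →ₗ[ℝ] 𝓢(V, ℝ)) : Prop :=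
  ∃ C ≥ 0, ∀ t s f g, wienerSeminorm 2 t s (B f g) ≤
    C * (wienerSeminorm 2 t s f * wienerSeminorm 2 t s g)

lemma isOrderTwo_lineDerivOpCLM (m : V) : IsOrderTwo (lineDerivOpCLM ℝ 𝓢(V, ℝ) m) :=
  ⟨2 * Real.pi * ‖m‖, by positivity, fun t s f =>
    (wienerSeminorm_lineDerivOp_le 0 t s m f).trans
      (by gcongr; exact wienerSeminorm_mono one_le_two t s f)⟩

lemma isOrderTwo_lineDerivOpCLM_comp (m n : V) :
    IsOrderTwo (lineDerivOpCLM ℝ 𝓢(V, ℝ) m ∘L lineDerivOpCLM ℝ 𝓢(V, ℝ) n) := by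
  refine ⟨2 * Real.pi * ‖m‖ * (2 * Real.pi * ‖n‖), by positivity, fun t s f => ?_⟩
  rw [mul_assoc _ (2 * Real.pi * ‖n‖)]
  refine (wienerSeminorm_lineDerivOp_le 0 t s m (∂_{n} f)).trans ?_
  gcongr
  exact wienerSeminorm_lineDerivOp_le 1 t s n f

lemma isOrderTwo_laplacianCLM : IsOrderTwo (laplacianCLM ℝ V 𝓢(V, ℝ)) := by
  refine ⟨(2 * Real.pi) ^ 2, by positivity, fun t s f =>
    wienerSeminorm_le_of_norm_le t s fun ξ => ?_⟩
  have : ‖realFourier (Δ f) ξ‖ = (2 * Real.pi) ^ 2 * (‖ξ‖ ^ 2 * ‖realFourier f ξ‖) := by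
    rw [realFourier_laplacian_apply, norm_mul, Complex.norm_real, norm_neg,
      Real.norm_of_nonneg (by positivity), mul_assoc]
  change _ * ‖realFourier (Δ f) ξ‖ ≤ _
  rw [this, pow_zero, one_mul]
  gcongr
  linarith

lemma IsOrderTwo.isWienerBounded_smoothedProduct {A B : 𝓢(V, ℝ) →L[ℝ] 𝓢(V, ℝ)}
    (hA : IsOrderTwo A) (hB : IsOrderTwo B) : IsWienerBounded (smoothedProduct A B) := by
  obtain ⟨C, hC, hA⟩ := hA
  obtain ⟨D, hD, hB⟩ := hB
  refine ⟨2 * (C * D), by positivity, fun t s f g => ?_⟩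
  calc wienerSeminorm 2 t s (smoothedProduct A B f g)
      ≤ 2 * (wienerSeminorm 0 t s (A f) * wienerSeminorm 0 t s (B g)) :=
        (wienerSeminorm_oneSubLaplacianInv_le t s _).trans
          (by gcongr; exact wienerSeminorm_mulₗ_le 0 t s _ _)
    _ ≤ 2 * ((C * wienerSeminorm 2 t s f) * (D * wienerSeminorm 2 t s g)) := by
        gcongr
        exacts [hA t s f, hB t s g]
    _ = _ := by ring

lemma IsWienerBounded.add {A B : 𝓢(V, ℝ) →ₗ[ℝ] 𝓢(V, ℝ) →ₗ[ℝ] 𝓢(V, ℝ)}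
    (hA : IsWienerBounded A) (hB : IsWienerBounded B) : IsWienerBounded (A + B) := by
  obtain ⟨C, hC, hA⟩ := hA
  obtain ⟨D, hD, hB⟩ := hB
  refine ⟨C + D, by positivity, fun t s f g => ?_⟩
  rw [add_mul]
  exact (map_add_le_add _ _ _).trans (add_le_add (hA t s f g) (hB t s f g))

lemma IsWienerBounded.sub {A B : 𝓢(V, ℝ) →ₗ[ℝ] 𝓢(V, ℝ) →ₗ[ℝ] 𝓢(V, ℝ)}
    (hA : IsWienerBounded A) (hB : IsWienerBounded B) : IsWienerBounded (A - B) := by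
  obtain ⟨C, hC, hA⟩ := hA
  obtain ⟨D, hD, hB⟩ := hB
  refine ⟨C + D, by positivity, fun t s f g => ?_⟩
  rw [add_mul]
  exact (map_sub_le_add _ _ _).trans (add_le_add (hA t s f g) (hB t s f g))

lemma IsWienerBounded.const_smul {B : 𝓢(V, ℝ) →ₗ[ℝ] 𝓢(V, ℝ) →ₗ[ℝ] 𝓢(V, ℝ)} (c : ℝ)
    (hB : IsWienerBounded B) : IsWienerBounded (c • B) := by
  obtain ⟨C, hC, hB⟩ := hB
  refine ⟨‖c‖ * C, by positivity, fun t s f g => ?_⟩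
  rw [LinearMap.smul_apply, LinearMap.smul_apply, map_smul_eq_mul, mul_assoc]
  gcongr
  exact hB t s f g

lemma isWienerBounded_sum {α : Type*} (S : Finset α)
    {B : α → 𝓢(V, ℝ) →ₗ[ℝ] 𝓢(V, ℝ) →ₗ[ℝ] 𝓢(V, ℝ)} (hB : ∀ k, IsWienerBounded (B k)) :
    IsWienerBounded (∑ k ∈ S, B k) :=
  Finset.sum_induction B IsWienerBounded (fun _ _ => .add) ⟨0, le_rfl, by simp⟩ fun k _ => hB k

lemma isWienerBounded_tangentialForm (m : V) : IsWienerBounded (tangentialForm m) :=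
  isOrderTwo_laplacianCLM.isWienerBounded_smoothedProduct (isOrderTwo_lineDerivOpCLM m)

lemma isWienerBounded_normalForm (m n : V) : IsWienerBounded (normalForm m n) := by
  refine .sub (.add ?_ (.const_smul _ ?_)) (.const_smul _ (isWienerBounded_sum _ fun k => ?_))
  · exact (isOrderTwo_lineDerivOpCLM m).isWienerBounded_smoothedProduct
      (isOrderTwo_lineDerivOpCLM n)
  · exact isOrderTwo_laplacianCLM.isWienerBounded_smoothedProduct
      (isOrderTwo_lineDerivOpCLM_comp m n)
  · exact (isOrderTwo_lineDerivOpCLM_comp _ m).isWienerBounded_smoothedProduct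
      (isOrderTwo_lineDerivOpCLM_comp _ n)

end Gunther

/-! ### Quadratic fixed point equations -/

section Picard

variable {E : Type*} [AddCommGroup E] [Module ℝ E]

/-- The Picard iterates of the quadratic fixed point equation `v = e + Q v v`, starting from `0`. -/
def picard (Q : E →ₗ[ℝ] E →ₗ[ℝ] E) (e : E) : ℕ → E
  | 0 => 0
  | n + 1 => e + Q (picard Q e n) (picard Q e n)

variable {Q : E →ₗ[ℝ] E →ₗ[ℝ] E} {e : E} {p : Seminorm ℝ E} {C : ℝ}

lemma seminorm_picard_le (hC : 0 ≤ C) (hQ : ∀ v w, p (Q v w) ≤ C * (p v * p w))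
    (he : 8 * C * p e ≤ 1) (n : ℕ) : p (picard Q e n) ≤ 2 * p e := by
  induction n with
  | zero => simp [picard]
  | succ n ih =>
    calc p (picard Q e (n + 1)) ≤ p e + C * (p (picard Q e n) * p (picard Q e n)) :=
          (map_add_le_add p _ _).trans (by gcongr; exact hQ _ _)
      _ ≤ p e + C * ((2 * p e) * (2 * p e)) := by gcongr
      _ = p e + (8 * C * p e) * p e / 2 := by ring
      _ ≤ p e + 1 * p e / 2 := by gcongr
      _ ≤ 2 * p e := by linarith [apply_nonneg p e]

lemma seminorm_picard_succ_sub_le (hC : 0 ≤ C) (hQ : ∀ v w, p (Q v w) ≤ C * (p v * p w))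
    (he : 8 * C * p e ≤ 1) (n : ℕ) :
    p (picard Q e (n + 1) - picard Q e n) ≤ 2 * p e * (1 / 2) ^ n := by
  have picard_le := seminorm_picard_le hC hQ he
  induction n with
  | zero => simpa [picard] using picard_le 1
  | succ n ih =>
    set D := picard Q e (n + 1) - picard Q e n with hD
    have polarization : picard Q e (n + 1 + 1) - picard Q e (n + 1) =
        Q (picard Q e (n + 1)) D + Q D (picard Q e n) := by
      rw [picard, hD, map_sub, map_sub, LinearMap.sub_apply, sub_add_sub_cancel]
      exact add_sub_add_left_eq_sub _ _ e
    rw [polarization]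
    calc _ ≤ C * (p (picard Q e (n + 1)) * p D) + C * (p D * p (picard Q e n)) :=
          (map_add_le_add p _ _).trans (add_le_add (hQ _ _) (hQ _ _))
      _ ≤ C * ((2 * p e) * p D) + C * (p D * (2 * p e)) := by
          gcongr
          exacts [picard_le _, picard_le _]
      _ = (8 * C * p e) * p D / 2 := by ring
      _ ≤ 1 * (2 * p e * (1 / 2) ^ n) / 2 := by gcongr
      _ = 2 * p e * (1 / 2) ^ (n + 1) := by ring

end Picard

/-! ### Günther's perturbation theorem -/

section Perturbation

variable {V ι κ : Type*} [NormedAddCommGroup V] [InnerProductSpace ℝ V]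

/-- The action of a matrix of Schwartz functions on a vector of Schwartz functions. -/
def mulVecₗ [Fintype κ] (E : ι → κ → 𝓢(V, ℝ)) : (κ → 𝓢(V, ℝ)) →ₗ[ℝ] (ι → 𝓢(V, ℝ)) :=
  LinearMap.pi fun a => ∑ k, mulₗ (E a k) ∘ₗ LinearMap.proj k

/-- The vector valued bilinear map `(v, w) ↦ ∑ a, B k (v a) (w a)`. -/
def sumForm [Fintype ι] (B : κ → 𝓢(V, ℝ) →ₗ[ℝ] 𝓢(V, ℝ) →ₗ[ℝ] 𝓢(V, ℝ)) :
    (ι → 𝓢(V, ℝ)) →ₗ[ℝ] (ι → 𝓢(V, ℝ)) →ₗ[ℝ] (κ → 𝓢(V, ℝ)) :=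
  LinearMap.mk₂ ℝ (fun v w k => ∑ a, B k (v a) (w a))
    (fun v v' w => by ext1 k; simp [Finset.sum_add_distrib])
    (fun c v w => by ext1 k; simp [Finset.smul_sum])
    (fun v w w' => by ext1 k; simp [Finset.sum_add_distrib])
    (fun c v w => by ext1 k; simp [Finset.smul_sum])

lemma mulVecₗ_apply [Fintype κ] (E : ι → κ → 𝓢(V, ℝ)) (f : κ → 𝓢(V, ℝ)) (a : ι) :
    mulVecₗ E f a = ∑ k, mulₗ (E a k) (f k) := by
  simp [mulVecₗ]

lemma sumForm_apply [Fintype ι] (B : κ → 𝓢(V, ℝ) →ₗ[ℝ] 𝓢(V, ℝ) →ₗ[ℝ] 𝓢(V, ℝ))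
    (v w : ι → 𝓢(V, ℝ)) (k : κ) :
    sumForm B v w k = ∑ a, B k (v a) (w a) := rfl

variable [FiniteDimensional ℝ V] [MeasurableSpace V] [BorelSpace V] [Fintype ι] [Fintype κ]

lemma wienerSeminorm_sum_le (a : ℕ) (t : ℝ≥0) (s : ℕ) (f : ι → 𝓢(V, ℝ)) :
    wienerSeminorm a t s (∑ k, f k) ≤ ∑ k, wienerSeminorm a t s (f k) :=
  Finset.le_sum_of_subadditive _ (map_zero (wienerSeminorm a t s)).le
    (map_add_le_add (wienerSeminorm a t s)) _ _

/-- The sum of the Wiener seminorms of order two of the components. -/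
def sumSeminorm (t : ℝ≥0) (s : ℕ) : Seminorm ℝ (ι → 𝓢(V, ℝ)) :=
  ∑ a, (wienerSeminorm 2 t s).comp (LinearMap.proj a)

lemma sumSeminorm_apply (t : ℝ≥0) (s : ℕ) (v : ι → 𝓢(V, ℝ)) :
    sumSeminorm t s v = ∑ a, wienerSeminorm 2 t s (v a) := by
  simp [sumSeminorm, _root_.sum_apply]

lemma wienerSeminorm_le_sumSeminorm (t : ℝ≥0) (s : ℕ) (v : ι → 𝓢(V, ℝ)) (a : ι) :
    wienerSeminorm 2 t s (v a) ≤ sumSeminorm t s v := by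
  rw [sumSeminorm_apply]
  exact Finset.single_le_sum (f := fun a => wienerSeminorm 2 t s (v a))
    (fun _ _ => apply_nonneg _ _) (Finset.mem_univ a)

lemma tendsto_sumSeminorm (s : ℕ) (v : ι → 𝓢(V, ℝ)) :
    Tendsto (fun t => sumSeminorm t s v) (𝓝 0) (𝓝 (sumSeminorm 0 0 v)) := by
  simp only [sumSeminorm_apply]
  exact tendsto_finsetSum _ fun a _ => tendsto_wienerSeminorm 2 s (v a)

lemma sumSeminorm_mulVecₗ_le (t : ℝ≥0) (s : ℕ) (E : ι → κ → 𝓢(V, ℝ)) (f : κ → 𝓢(V, ℝ)) :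
    sumSeminorm t s (mulVecₗ E f) ≤ (∑ a, sumSeminorm t s (E a)) * sumSeminorm t s f := by
  rw [sumSeminorm_apply, Finset.sum_mul]
  refine Finset.sum_le_sum fun a _ => ?_
  rw [mulVecₗ_apply, sumSeminorm_apply t s (E a), Finset.sum_mul]
  refine (wienerSeminorm_sum_le 2 t s _).trans (Finset.sum_le_sum fun k _ => ?_)
  refine (wienerSeminorm_mulₗ_le 2 t s _ _).trans ?_
  gcongr
  exact wienerSeminorm_le_sumSeminorm t s f k

lemma exists_sumSeminorm_sumForm_le {B : κ → 𝓢(V, ℝ) →ₗ[ℝ] 𝓢(V, ℝ) →ₗ[ℝ] 𝓢(V, ℝ)}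
    (hB : ∀ k, IsWienerBounded (B k)) : ∃ C ≥ 0, ∀ t s (v w : ι → 𝓢(V, ℝ)),
      sumSeminorm t s (sumForm B v w) ≤ C * (sumSeminorm t s v * sumSeminorm t s w) := by
  choose C hC hB using hB
  refine ⟨∑ k, C k, Finset.sum_nonneg fun k _ => hC k, fun t s v w => ?_⟩
  rw [sumSeminorm_apply, Finset.sum_mul]
  refine Finset.sum_le_sum fun k _ => ?_
  calc wienerSeminorm 2 t s (sumForm B v w k)
      ≤ ∑ a, C k * (wienerSeminorm 2 t s (v a) * wienerSeminorm 2 t s (w a)) :=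
        (wienerSeminorm_sum_le 2 t s _).trans (Finset.sum_le_sum fun a _ => hB k t s _ _)
    _ ≤ ∑ a, C k * (wienerSeminorm 2 t s (v a) * sumSeminorm t s w) := by
        gcongr with a
        exacts [hC k, wienerSeminorm_le_sumSeminorm t s w a]
    _ = C k * (sumSeminorm t s v * sumSeminorm t s w) := by
        rw [sumSeminorm_apply t s v, Finset.sum_mul, Finset.mul_sum]

-- Smallness at `t = 0`, where the seminorms do not depend on `s`, gives smallness at every order
-- `s` for sufficiently small `t`. This is why a single `δ` works for all derivatives.
lemma exists_norm_iteratedFDeriv_picard_sub_le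
    {B : κ → 𝓢(V, ℝ) →ₗ[ℝ] 𝓢(V, ℝ) →ₗ[ℝ] 𝓢(V, ℝ)} (hB : ∀ k, IsWienerBounded (B k))
    (E : ι → κ → 𝓢(V, ℝ)) :
    ∃ δ > 0, ∀ f : κ → 𝓢(V, ℝ), sumSeminorm 0 0 f ≤ δ → ∀ k a, ∃ c : ℝ, ∀ n x,
      ‖iteratedFDeriv ℝ k (picard ((sumForm B).compr₂ (mulVecₗ E)) (mulVecₗ E f) (n + 1) a -
        picard ((sumForm B).compr₂ (mulVecₗ E)) (mulVecₗ E f) n a : 𝓢(V, ℝ)) x‖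
          ≤ c * (1 / 2) ^ n := by
  obtain ⟨C, hC, sumForm_le⟩ := exists_sumSeminorm_sumForm_le (ι := ι) hB
  let N (t : ℝ≥0) (s : ℕ) : ℝ := ∑ a, sumSeminorm t s (E a)
  have N_nonneg (t : ℝ≥0) (s : ℕ) : 0 ≤ N t s := Finset.sum_nonneg fun a _ => apply_nonneg _ _
  have : 0 ≤ N 0 0 := N_nonneg 0 0
  refine ⟨(8 * (N 0 0 * C) * N 0 0 + 1)⁻¹, by positivity, fun f hf k a => ?_⟩
  set Q := (sumForm (ι := ι) B).compr₂ (mulVecₗ E)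
  set e := mulVecₗ E f
  have seminorm_Q_le (t : ℝ≥0) (s : ℕ) (v w : ι → 𝓢(V, ℝ)) :
      sumSeminorm t s (Q v w) ≤ N t s * C * (sumSeminorm t s v * sumSeminorm t s w) := by
    refine (sumSeminorm_mulVecₗ_le t s E _).trans ?_
    rw [mul_assoc]
    exact mul_le_mul_of_nonneg_left (sumForm_le t s v w) (N_nonneg t s)
  have small_at_zero : 8 * (N 0 0 * C) * sumSeminorm 0 0 e < 1 := by
    calc _ ≤ 8 * (N 0 0 * C) * (N 0 0 * (8 * (N 0 0 * C) * N 0 0 + 1)⁻¹) := by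
          gcongr
          exact (sumSeminorm_mulVecₗ_le 0 0 E f).trans (by gcongr)
      _ < 1 := by
          rw [← mul_assoc, mul_inv_lt_iff₀ (by positivity)]
          linarith
  have tendsto_small : Tendsto (fun t => 8 * (N t k * C) * sumSeminorm t k e) (𝓝[>] 0)
      (𝓝 (8 * (N 0 0 * C) * sumSeminorm 0 0 e)) :=
    ((((tendsto_finsetSum _ fun a _ => tendsto_sumSeminorm k (E a)).mul_const C).const_mul 8).mul
      (tendsto_sumSeminorm k e)).mono_left nhdsWithin_le_nhds
  obtain ⟨t, small, ht : 0 < t⟩ :=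
    ((tendsto_small.eventually (gt_mem_nhds small_at_zero)).and self_mem_nhdsWithin).exists
  refine ⟨(2 * Real.pi / t) ^ k * (2 * sumSeminorm t k e), fun n x => ?_⟩
  refine (norm_iteratedFDeriv_le_wienerSeminorm ht k _ x).trans ?_
  rw [mul_assoc]
  gcongr
  exact (wienerSeminorm_mono zero_le_two t k _).trans
    ((wienerSeminorm_le_sumSeminorm t k (picard Q e (n + 1) - picard Q e n) a).trans
      (seminorm_picard_succ_sub_le (mul_nonneg (N_nonneg t k) hC) (seminorm_Q_le t k) small.le n))

end Perturbation

section JetSystem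

lemma exists_contDiff_tendsto_fderiv {V F : Type*} [NormedAddCommGroup V] [NormedSpace ℝ V]
    [NormedAddCommGroup F] [NormedSpace ℝ F] [CompleteSpace F] {v : ℕ → V → F}
    (hv : ∀ n, ContDiff ℝ ∞ (v n)) {c : ℕ → ℕ → ℝ} (hc : ∀ k, Summable (c k))
    (hvc : ∀ k n x, ‖iteratedFDeriv ℝ k (v (n + 1) - v n) x‖ ≤ c k n) :
    ∃ f : V → F, ContDiff ℝ ∞ f ∧
      ∀ x, Tendsto (fun n => fderiv ℝ (v n) x) atTop (𝓝 (fderiv ℝ f x)) := by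
  let w (n : ℕ) : V → F := v (n + 1) - v n
  have w_smooth (n : ℕ) : ContDiff ℝ ∞ (w n) := (hv (n + 1)).sub (hv n)
  have w_differentiable (n : ℕ) : Differentiable ℝ (w n) := (w_smooth n).differentiable (by simp)
  have v_differentiable (n : ℕ) : Differentiable ℝ (v n) := (hv n).differentiable (by simp)
  have norm_w_le (n : ℕ) (y : V) : ‖w n y‖ ≤ c 0 n :=
    norm_iteratedFDeriv_zero (𝕜 := ℝ) (f := w n) ▸ hvc 0 n y
  have norm_fderiv_w_le (n : ℕ) (y : V) : ‖fderiv ℝ (w n) y‖ ≤ c 1 n := by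
    simpa [norm_iteratedFDeriv_one] using hvc 1 n y
  have sum_smooth : ContDiff ℝ ∞ fun x => ∑' n, w n x :=
    contDiff_tsum w_smooth (fun k _ => hc k) fun k n x _ => hvc k n x
  refine ⟨v 0 + fun x => ∑' n, w n x, (hv 0).add sum_smooth, fun x => ?_⟩
  have fderiv_sum : fderiv ℝ (fun x => ∑' n, w n x) x = ∑' n, fderiv ℝ (w n) x :=
    fderiv_tsum_apply (hc 1) w_differentiable norm_fderiv_w_le
      (.of_norm_bounded (hc 0) fun n => norm_w_le n x) x
  rw [fderiv_add (v_differentiable 0 x) (sum_smooth.differentiable (by simp) x), fderiv_sum]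
  have partial_sums : Tendsto (fun n => ∑ k ∈ Finset.range n, fderiv ℝ (w k) x) atTop
      (𝓝 (∑' n, fderiv ℝ (w n) x)) :=
    (Summable.of_norm_bounded (hc 1) (norm_fderiv_w_le · x)).hasSum.tendsto_sum_nat
  refine (partial_sums.const_add (fderiv ℝ (v 0) x)).congr fun n => ?_
  have telescope (k : ℕ) : fderiv ℝ (w k) x = fderiv ℝ (v (k + 1)) x - fderiv ℝ (v k) x :=
    fderiv_sub (v_differentiable _ x) (v_differentiable _ x)
  simp only [telescope, Finset.sum_range_sub fun k => fderiv ℝ (v k) x, add_sub_cancel]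

/-- The symmetrization of a family indexed by pairs, as a family indexed by unordered pairs. -/
def symmetrize {J α : Type*} [AddCommGroup α] [Module ℝ α] (B : J → J → α) : Sym2 J → α :=
  Sym2.lift ⟨fun i j => (1 / 2 : ℝ) • (B i j + B j i), fun i j => by simp only [add_comm]⟩

lemma symmetrize_mk {J α : Type*} [AddCommGroup α] [Module ℝ α] (B : J → J → α) (i j : J) :
    symmetrize B s(i, j) = (1 / 2 : ℝ) • (B i j + B j i) := rfl

variable {V ι J : Type*} [NormedAddCommGroup V]

section Gram

variable [NormedSpace ℝ V] [Fintype ι]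

/-- The Gram matrix `∑ a, ∂ᵢ uₐ ∂ⱼ vₐ` of the derivatives of two maps along a family of directions.
For `u = v` this is the metric induced by `u`. -/
def gradientGram (b : J → V) (u v : ι → V → ℝ) (x : V) (i j : J) : ℝ :=
  ∑ a, fderiv ℝ (u a) x (b i) * fderiv ℝ (v a) x (b j)

lemma gradientGram_add (b : J → V) {u v : ι → V → ℝ} {x : V}
    (hu : ∀ a, DifferentiableAt ℝ (u a) x) (hv : ∀ a, DifferentiableAt ℝ (v a) x) (i j : J) :
    gradientGram b (u + v) (u + v) x i j = gradientGram b u u x i j +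
      (gradientGram b u v x i j + gradientGram b u v x j i) + gradientGram b v v x i j := by
  simp only [gradientGram, ← Finset.sum_add_distrib]
  refine Finset.sum_congr rfl fun a _ => ?_
  rw [Pi.add_apply, fderiv_add (hu a) (hv a), _root_.add_apply, _root_.add_apply]
  ring

lemma tendsto_gradientGram (b : J → V) {α : Type*} {l : Filter α} {u v : α → ι → V → ℝ}
    {u' v' : ι → V → ℝ} {x : V}
    (hu : ∀ a, Tendsto (fun n => fderiv ℝ (u n a) x) l (𝓝 (fderiv ℝ (u' a) x)))
    (hv : ∀ a, Tendsto (fun n => fderiv ℝ (v n a) x) l (𝓝 (fderiv ℝ (v' a) x))) (i j : J) :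
    Tendsto (fun n => gradientGram b (u n) (v n) x i j) l (𝓝 (gradientGram b u' v' x i j)) :=
  tendsto_finsetSum _ fun a _ =>
    (((ContinuousLinearMap.apply ℝ ℝ (b i)).continuous.tendsto _).comp (hu a)).mul
      (((ContinuousLinearMap.apply ℝ ℝ (b j)).continuous.tendsto _).comp (hv a))

end Gram

/-- The matrix of first and second derivatives of a map along a family of directions. A map is free
when the rows of this matrix are linearly independent. -/
def jetMatrix [NormedSpace ℝ V] (b : J → V) (u : ι → V → ℝ) (x : V) :
    Matrix (J ⊕ Sym2 J) ι ℝ :=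
  .of fun κ a => κ.elim (fun i => fderiv ℝ (u a) x (b i))
    (symmetrize fun i j => fderiv ℝ (fun y => fderiv ℝ (u a) y (b i)) x (b j))

lemma fderiv_fderiv_apply_comm [NormedSpace ℝ V] {f : V → ℝ} {x : V} (hf : ContDiffAt ℝ 2 f x)
    (m n : V) :
    fderiv ℝ (fun y => fderiv ℝ f y m) x n = fderiv ℝ (fun y => fderiv ℝ f y n) x m := by
  have fderiv_differentiable : DifferentiableAt ℝ (fderiv ℝ f) x :=
    (hf.fderiv_right (m := 1) (by norm_num)).differentiableAt (by simp)
  have apply (m n : V) : fderiv ℝ (fun y => fderiv ℝ f y m) x n = fderiv ℝ (fderiv ℝ f) x n m := by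
    rw [fderiv_clm_apply fderiv_differentiable (differentiableAt_const m)]
    simp
  rw [apply, apply]
  exact hf.isSymmSndFDerivAt (by simp) n m

lemma jetMatrix_inr [NormedSpace ℝ V] (b : J → V) {u : ι → V → ℝ} {x : V} {a : ι}
    (hu : ContDiffAt ℝ 2 (u a) x) (i j : J) : jetMatrix b u x (.inr s(i, j)) a =
      fderiv ℝ (fun y => fderiv ℝ (u a) y (b i)) x (b j) := by
  change symmetrize (fun i j => fderiv ℝ (fun y => fderiv ℝ (u a) y (b i)) x (b j)) s(i, j) = _
  rw [symmetrize_mk, fderiv_fderiv_apply_comm hu (b j), ← two_smul ℝ, smul_smul]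
  norm_num

-- Differentiating `∑ a, ∂ᵢ uₐ vₐ = q` turns a second-order condition on `v` into a condition on
-- its first derivatives, without differentiating the solution operator.
lemma gradientGram_eq_of_sum_jetMatrix_inl [NormedSpace ℝ V] [Fintype ι] {b : J → V}
    {u : ι → V → ℝ} (hu : ∀ a, ContDiff ℝ 2 (u a)) {v : ι → V → ℝ} {q : V → ℝ} {x : V}
    (hv : ∀ a, DifferentiableAt ℝ (v a) x) {i : J}
    (hq : ∀ᶠ y in 𝓝 x, ∑ a, jetMatrix b u y (.inl i) a * v a y = q y) (j : J) :
    gradientGram b u v x i j =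
      fderiv ℝ q x (b j) - ∑ a, jetMatrix b u x (.inr s(i, j)) a * v a x := by
  have deriv_u (a : ι) : DifferentiableAt ℝ (fun y => fderiv ℝ (u a) y (b i)) x :=
    ((hu a).fderiv_right (m := 1) one_add_one_eq_two.le).differentiable (by simp) x |>.clm_apply
      (differentiableAt_const _)
  have product_rule := HasFDerivAt.fun_sum (u := Finset.univ) fun a _ =>
    (deriv_u a).hasFDerivAt.mul (hv a).hasFDerivAt
  have deriv_q := (product_rule.congr_of_eventuallyEq (hq.mono fun y => Eq.symm)).fderiv
  simp only [deriv_q, jetMatrix_inr b (hu _).contDiffAt, _root_.sum_apply,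
    _root_.add_apply, _root_.smul_apply, smul_eq_mul, Finset.sum_add_distrib, gradientGram,
    mul_comm (v _ x)]
  ring

variable [InnerProductSpace ℝ V]

/-- The quadratic terms in Günther's form of the perturbation equation `jetMatrix b u * v = …`. -/
def guntherForm [FiniteDimensional ℝ V] [MeasurableSpace V] [BorelSpace V] (b : J → V) :
    J ⊕ Sym2 J → 𝓢(V, ℝ) →ₗ[ℝ] 𝓢(V, ℝ) →ₗ[ℝ] 𝓢(V, ℝ) :=
  Sum.elim (fun i => tangentialForm (b i))
    ((1 / 2 : ℝ) • symmetrize fun i j => normalForm (b i) (b j))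

/-- The inhomogeneity in Günther's form of the perturbation equation for a change `h` of the induced
metric. -/
def jetSource (h : Sym2 J → 𝓢(V, ℝ)) : J ⊕ Sym2 J → 𝓢(V, ℝ) :=
  Sum.elim 0 ((-(1 / 2) : ℝ) • h)

variable [FiniteDimensional ℝ V] [MeasurableSpace V] [BorelSpace V]

lemma isWienerBounded_guntherForm (b : J → V) (κ : J ⊕ Sym2 J) :
    IsWienerBounded (guntherForm b κ) := by
  rcases κ with i | κ
  · exact isWienerBounded_tangentialForm (b i)
  · induction κ with
    | h i j => exact .const_smul _ (.const_smul _
        ((isWienerBounded_normalForm (b i) (b j)).add (isWienerBounded_normalForm (b j) (b i))))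

lemma guntherForm_inr_self (b : J → V) (i j : J) (f : 𝓢(V, ℝ)) :
    guntherForm b (.inr s(i, j)) f f = (1 / 2 : ℝ) • normalForm (b i) (b j) f f := by
  change (1 / 2 : ℝ) • (1 / 2 : ℝ) • (normalForm (b i) (b j) f f + normalForm (b j) (b i) f f) = _
  rw [normalForm_comm (b j), ← two_smul ℝ, smul_smul (1 / 2) 2]
  norm_num

variable [Fintype ι]

lemma gradientGram_eq_sumForm_guntherForm (b : J → V) (w : ι → 𝓢(V, ℝ)) (x : V) (i j : J) :
    gradientGram b (fun a => w a) (fun a => w a) x i j =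
      2 * sumForm (guntherForm b) w w (.inr s(i, j)) x -
        fderiv ℝ (sumForm (guntherForm b) w w (.inl j)) x (b i) -
        fderiv ℝ (sumForm (guntherForm b) w w (.inl i)) x (b j) := by
  have lineDerivOp_sum (m n : V) :
      ∂_{m} (∑ a, tangentialForm n (w a) (w a)) = ∑ a, ∂_{m} (tangentialForm n (w a) (w a)) :=
    map_sum (lineDerivOpCLM ℝ 𝓢(V, ℝ) m) _ _
  have sum_identity : ∑ a, mulₗ (∂_{b i} (w a)) (∂_{b j} (w a)) =
      (2 : ℝ) • sumForm (guntherForm b) w w (.inr s(i, j)) -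
        ∂_{b i} (sumForm (guntherForm b) w w (.inl j)) -
        ∂_{b j} (sumForm (guntherForm b) w w (.inl i)) := by
    simp only [sumForm_apply, guntherForm_inr_self, ← Finset.smul_sum, smul_smul]
    simp only [guntherForm, Sum.elim_inl, lineDerivOp_sum, mulₗ_lineDerivOp_eq,
      Finset.sum_sub_distrib]
    norm_num
  simpa only [_root_.sum_apply, _root_.sub_apply, _root_.smul_apply, mulₗ_apply, smul_eq_mul,
    lineDerivOp_apply_eq_fderiv, gradientGram] using
      congrArg (fun f : 𝓢(V, ℝ) => f x) sum_identity

/-- The Picard iterates of Günther's form of the perturbation equation, where `E` is a right inverse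
of the jet matrix. -/
def guntherIterate [Fintype J] [DecidableEq J] (b : J → V) (E : ι → J ⊕ Sym2 J → 𝓢(V, ℝ))
    (h : Sym2 J → 𝓢(V, ℝ)) : ℕ → ι → 𝓢(V, ℝ) :=
  picard ((sumForm (guntherForm b)).compr₂ (mulVecₗ E)) (mulVecₗ E (jetSource h))

variable [Fintype J] [DecidableEq J]

lemma sum_jetMatrix_mul_guntherIterate_succ {b : J → V} {u : ι → V → ℝ} {x : V}
    {E : ι → J ⊕ Sym2 J → 𝓢(V, ℝ)}
    (hE : jetMatrix b u x * (.of fun a κ => E a κ x : Matrix ι (J ⊕ Sym2 J) ℝ) = 1)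
    (h : Sym2 J → 𝓢(V, ℝ)) (n : ℕ) (κ : J ⊕ Sym2 J) :
    ∑ a, jetMatrix b u x κ a * guntherIterate b E h (n + 1) a x = jetSource h κ x +
      sumForm (guntherForm b) (guntherIterate b E h n) (guntherIterate b E h n) κ x := by
  set w := guntherIterate b E h n
  set f := jetSource h + sumForm (guntherForm b) w w
  have guntherIterate_succ : guntherIterate b E h (n + 1) = mulVecₗ E f := (map_add _ _ _).symm
  have iterate_eq_mulVec : (fun a => guntherIterate b E h (n + 1) a x) =
      Matrix.of (fun a κ => E a κ x) *ᵥ fun κ => f κ x := by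
    ext a
    simp only [guntherIterate_succ, mulVecₗ_apply, _root_.sum_apply, mulₗ_apply]
    rfl
  change (jetMatrix b u x *ᵥ fun a => guntherIterate b E h (n + 1) a x) κ = f κ x
  rw [iterate_eq_mulVec, Matrix.mulVec_mulVec, hE, Matrix.one_mulVec]

lemma gradientGram_guntherIterate_succ {b : J → V} {u : ι → V → ℝ}
    (hu : ∀ a, ContDiff ℝ 2 (u a)) {O : Set V} (hO : IsOpen O)
    {E : ι → J ⊕ Sym2 J → 𝓢(V, ℝ)}
    (hE : ∀ x ∈ O, jetMatrix b u x * (.of fun a κ => E a κ x : Matrix ι (J ⊕ Sym2 J) ℝ) = 1)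
    (h : Sym2 J → 𝓢(V, ℝ)) (n : ℕ) {x : V} (hx : x ∈ O) (i j : J) :
    gradientGram b u (fun a => guntherIterate b E h (n + 1) a) x i j +
        gradientGram b u (fun a => guntherIterate b E h (n + 1) a) x j i =
      h s(i, j) x - gradientGram b (fun a => guntherIterate b E h n a)
        (fun a => guntherIterate b E h n a) x i j := by
  have first_order (k : J) : ∀ᶠ y in 𝓝 x,
      ∑ a, jetMatrix b u y (.inl k) a * guntherIterate b E h (n + 1) a y =
        sumForm (guntherForm b) (guntherIterate b E h n) (guntherIterate b E h n) (.inl k) y := by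
    filter_upwards [hO.mem_nhds hx] with y hy
    rw [sum_jetMatrix_mul_guntherIterate_succ (hE y hy)]
    exact zero_add _
  have gradientGram_eq (k l : J) := gradientGram_eq_of_sum_jetMatrix_inl hu
    (fun a => (guntherIterate b E h (n + 1) a).differentiableAt) (first_order k) l
  have jetSource_inr : jetSource h (.inr s(i, j)) x = -(1 / 2) * h s(i, j) x := rfl
  rw [gradientGram_eq, gradientGram_eq, Sym2.eq_swap (a := j),
    sum_jetMatrix_mul_guntherIterate_succ (hE x hx), jetSource_inr,
    gradientGram_eq_sumForm_guntherForm]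
  ring

lemma exists_tendsto_fderiv_guntherIterate (b : J → V) (E : ι → J ⊕ Sym2 J → 𝓢(V, ℝ)) :
    ∃ δ > 0, ∀ h : Sym2 J → 𝓢(V, ℝ), sumSeminorm 0 0 h ≤ δ →
      ∃ v : ι → V → ℝ, (∀ a, ContDiff ℝ ∞ (v a)) ∧ ∀ a x,
        Tendsto (fun n => fderiv ℝ (guntherIterate b E h n a) x) atTop (𝓝 (fderiv ℝ (v a) x)) := by
  obtain ⟨δ, hδ, convergence⟩ :=
    exists_norm_iteratedFDeriv_picard_sub_le (isWienerBounded_guntherForm b) E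
  refine ⟨δ, hδ, fun h hh => ?_⟩
  have jetSource_le : sumSeminorm 0 0 (jetSource h) ≤ sumSeminorm 0 0 h := by
    simp only [sumSeminorm_apply, jetSource, Fintype.sum_sum_type, Sum.elim_inl, Sum.elim_inr,
      Pi.zero_apply, Pi.smul_apply, map_zero, map_smul_eq_mul, Finset.sum_const_zero, zero_add]
    gcongr
    exact mul_le_of_le_one_left (apply_nonneg _ _) (by norm_num)
  choose c hc using convergence (jetSource h) (jetSource_le.trans hh)
  choose v v_smooth tendsto_v using fun a =>
    exists_contDiff_tendsto_fderiv (v := fun n => guntherIterate b E h n a)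
      (fun n => (guntherIterate b E h n a).smooth _)
      (fun k => summable_geometric_two.mul_left (c k a)) (fun k => hc k a)
  exact ⟨v, v_smooth, tendsto_v⟩

theorem exists_gradientGram_add_eq {b : J → V} {u : ι → V → ℝ} (hu : ∀ a, ContDiff ℝ 2 (u a))
    {O : Set V} (hO : IsOpen O) {E : ι → J ⊕ Sym2 J → 𝓢(V, ℝ)}
    (hE : ∀ x ∈ O, jetMatrix b u x * (.of fun a κ => E a κ x : Matrix ι (J ⊕ Sym2 J) ℝ) = 1) :
    ∃ δ > 0, ∀ h : Sym2 J → 𝓢(V, ℝ), sumSeminorm 0 0 h ≤ δ →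
      ∃ v : ι → V → ℝ, (∀ a, ContDiff ℝ ∞ (v a)) ∧ ∀ x ∈ O, ∀ i j,
        gradientGram b (u + v) (u + v) x i j = gradientGram b u u x i j + h s(i, j) x := by
  obtain ⟨δ, hδ, convergence⟩ := exists_tendsto_fderiv_guntherIterate b E
  refine ⟨δ, hδ, fun h hh => ?_⟩
  obtain ⟨v, v_smooth, tendsto_v⟩ := convergence h hh
  refine ⟨v, v_smooth, fun x hx i j => ?_⟩
  have tendsto_linear (i j : J) :
      Tendsto (fun n => gradientGram b u (fun a => guntherIterate b E h (n + 1) a) x i j) atTop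
        (𝓝 (gradientGram b u v x i j)) :=
    (tendsto_gradientGram b (u := fun _ => u) (fun a => tendsto_const_nhds) (tendsto_v · x)
      i j).comp (tendsto_add_atTop_nat 1)
  have tendsto_quadratic : Tendsto (fun n => gradientGram b (fun a => guntherIterate b E h n a)
      (fun a => guntherIterate b E h n a) x i j) atTop (𝓝 (gradientGram b v v x i j)) :=
    tendsto_gradientGram b (tendsto_v · x) (tendsto_v · x) i j
  have perturbation_eq : gradientGram b u v x i j + gradientGram b u v x j i =
      h s(i, j) x - gradientGram b v v x i j := by
    refine tendsto_nhds_unique ((tendsto_linear i j).add (tendsto_linear j i)) ?_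
    simp only [gradientGram_guntherIterate_succ hu hO hE h _ hx i j]
    exact tendsto_quadratic.const_sub _
  rw [gradientGram_add b (fun a => (hu a).differentiable (by simp) x)
    (fun a => (v_smooth a).differentiable (by simp) x), perturbation_eq]
  ring

end JetSystem

/-! ### Cutting off smooth functions -/

section Cutoff

variable {V : Type*} [NormedAddCommGroup V]

lemma exists_schwartz_eq_mul [NormedSpace ℝ V] {χ f : V → ℝ} {W : Set V} (hW : IsOpen W)
    (hχ : ContDiff ℝ ∞ χ) (hχc : HasCompactSupport χ) (hχW : tsupport χ ⊆ W)
    (hf : ContDiffOn ℝ ∞ f W) : ∃ φ : 𝓢(V, ℝ), ∀ x, φ x = χ x * f x := by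
  have hsm : ContDiff ℝ ∞ fun x => χ x * f x := contDiff_iff_contDiffAt.2 fun x => by
    by_cases hx : x ∈ tsupport χ
    · exact hχ.contDiffAt.mul (hf.contDiffAt (hW.mem_nhds (hχW hx)))
    · refine (contDiffAt_const (c := 0)).congr_of_eventuallyEq ?_
      filter_upwards [notMem_tsupport_iff_eventuallyEq.1 hx] with y hy
      rw [hy, Pi.zero_apply, zero_mul]
  exact ⟨(hχc.mul_right (f' := f)).toSchwartzMap hsm, fun x => rfl⟩

lemma exists_schwartz_eqOn_ball [InnerProductSpace ℝ V] [FiniteDimensional ℝ V] {W : Set V}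
    (hW : IsOpen W) {x₀ : V} (hx₀ : x₀ ∈ W) :
    ∃ r > 0, Metric.ball x₀ r ⊆ W ∧ ∀ f : V → ℝ, ContDiffOn ℝ ∞ f W →
      ∃ φ : 𝓢(V, ℝ), ∀ x ∈ Metric.ball x₀ r, φ x = f x := by
  obtain ⟨R, hR, hRW⟩ := Metric.isOpen_iff.1 hW x₀ hx₀
  let χ : ContDiffBump x₀ := ⟨R / 4, R / 2, by positivity, by linarith⟩
  have hχW : tsupport χ ⊆ W := by
    rw [χ.tsupport_eq]
    exact (Metric.closedBall_subset_ball (half_lt_self hR)).trans hRW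
  refine ⟨R / 4, by positivity, (Metric.ball_subset_ball (by linarith)).trans hRW, fun f hf => ?_⟩
  obtain ⟨φ, hφ⟩ := exists_schwartz_eq_mul hW χ.contDiff χ.hasCompactSupport hχW hf
  exact ⟨φ, fun x hx => by
    rw [hφ, χ.one_of_mem_closedBall (Metric.ball_subset_closedBall hx), one_mul]⟩

lemma contDiff_det [NormedSpace ℝ V] {n : Type*} [Fintype n] [DecidableEq n]
    {M : V → Matrix n n ℝ} (hM : ∀ i j, ContDiff ℝ ∞ fun x => M x i j) :
    ContDiff ℝ ∞ fun x => (M x).det := by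
  simp only [Matrix.det_apply]
  fun_prop

lemma contDiffOn_inv_apply [NormedSpace ℝ V] {n : Type*} [Fintype n] [DecidableEq n]
    {M : V → Matrix n n ℝ} (hM : ∀ i j, ContDiff ℝ ∞ fun x => M x i j) (i j : n) :
    ContDiffOn ℝ ∞ (fun x => (M x)⁻¹ i j) {x | (M x).det ≠ 0} := by
  have hadj : ContDiff ℝ ∞ fun x => (M x).adjugate i j := by
    simp only [Matrix.adjugate_apply]
    refine contDiff_det fun k l => ?_
    obtain rfl | hk := eq_or_ne k j
    · simpa only [Matrix.updateRow_self] using contDiff_const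
    · simpa only [Matrix.updateRow_ne hk] using hM k l
  simp only [Matrix.inv_def, Matrix.smul_apply, Ring.inverse_eq_inv', smul_eq_mul]
  exact ((contDiff_det hM).contDiffOn.inv fun x hx => hx).mul hadj.contDiffOn

lemma exists_schwartz_rightInverse [InnerProductSpace ℝ V] [FiniteDimensional ℝ V]
    {n : Type*} [Fintype n] [DecidableEq n] {M : V → Matrix n n ℝ}
    (hM : ∀ i j, ContDiff ℝ ∞ fun x => M x i j) {x₀ : V} (hx₀ : (M x₀).det ≠ 0) :
    ∃ r > 0, ∃ E : n → n → 𝓢(V, ℝ), ∀ x ∈ Metric.ball x₀ r,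
      M x * (.of fun i j => E i j x : Matrix n n ℝ) = 1 := by
  obtain ⟨r, hr, hrW, hcut⟩ := exists_schwartz_eqOn_ball
    (isOpen_ne.preimage (contDiff_det hM).continuous) hx₀
  choose E hE using fun i j => hcut _ (contDiffOn_inv_apply hM i j)
  refine ⟨r, hr, E, fun x hx => ?_⟩
  rw [← Matrix.mul_nonsing_inv _ (IsUnit.mk0 _ (hrW hx))]
  congr 1
  ext i j
  exact hE i j x hx

end Cutoff

/-! ### Truncation and rescaling -/

section Truncation

variable {V : Type*} [NormedAddCommGroup V]

lemma exists_norm_comp_smul_le [NormedSpace ℝ V] [FiniteDimensional ℝ V] {F : V → ℝ}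
    (hF : ContDiff ℝ 1 F) (hF0 : F 0 = 0) (R : ℝ) :
    ∃ K, ∀ ε ∈ Icc (0 : ℝ) 1, ∀ x ∈ Metric.closedBall (0 : V) R, ‖F (ε • x)‖ ≤ ε * K := by
  have hconv := convex_closedBall (0 : V) R
  obtain ⟨K, hK⟩ := (isCompact_closedBall (0 : V) R).exists_bound_of_continuousOn
    (hF.continuous_fderiv one_ne_zero).continuousOn
  refine ⟨K * R, fun ε hε x hx => ?_⟩
  have hxR := mem_closedBall_zero_iff.1 hx
  have h0 : (0 : V) ∈ Metric.closedBall (0 : V) R :=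
    Metric.mem_closedBall_self ((norm_nonneg x).trans hxR)
  have hK0 : 0 ≤ K := (norm_nonneg _).trans (hK 0 h0)
  have hmvt := hconv.norm_image_sub_le_of_norm_fderiv_le
    (fun y _ => hF.differentiable one_ne_zero y) hK h0 (hconv.smul_mem_of_zero_mem h0 hx hε)
  rw [hF0, sub_zero, sub_zero, norm_smul, Real.norm_of_nonneg hε.1] at hmvt
  calc ‖F (ε • x)‖ ≤ K * (ε * ‖x‖) := hmvt
    _ ≤ K * (ε * R) := by gcongr; exact hε.1
    _ = ε * (K * R) := by ring

lemma exists_norm_iteratedFDeriv_comp_smul_le [NormedSpace ℝ V] [FiniteDimensional ℝ V]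
    {F : V → ℝ} (hF : ContDiff ℝ ∞ F) (hF0 : F 0 = 0) (R : ℝ) (m : ℕ) :
    ∃ K, ∀ ε ∈ Icc (0 : ℝ) 1, ∀ x ∈ Metric.closedBall (0 : V) R,
      ‖iteratedFDeriv ℝ m (fun y => F (ε • y)) x‖ ≤ ε * K := by
  obtain rfl | hm := eq_or_ne m 0
  · simpa only [norm_iteratedFDeriv_zero] using
      exists_norm_comp_smul_le (contDiff_infty.1 hF 1) hF0 R
  have hconv := convex_closedBall (0 : V) R
  obtain ⟨K, hK⟩ := (isCompact_closedBall (0 : V) R).exists_bound_of_continuousOn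
    (hF.continuous_iteratedFDeriv (m := m) (mod_cast le_top)).continuousOn
  refine ⟨K, fun ε hε x hx => ?_⟩
  have h0 : (0 : V) ∈ Metric.closedBall (0 : V) R :=
    Metric.mem_closedBall_self ((norm_nonneg x).trans (mem_closedBall_zero_iff.1 hx))
  rw [iteratedFDeriv_comp_const_smul ε (contDiff_infty.1 hF m)]
  simp only [norm_smul, norm_pow, Real.norm_of_nonneg hε.1]
  exact mul_le_mul (pow_le_of_le_one hε.1 hε.2 hm) (hK _ (hconv.smul_mem_of_zero_mem h0 hx hε))
    (norm_nonneg _) hε.1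

lemma exists_seminorm_mul_comp_smul_le [NormedSpace ℝ V] [FiniteDimensional ℝ V] {χ F : V → ℝ}
    (hχ : ContDiff ℝ ∞ χ) (hχc : HasCompactSupport χ) (hF : ContDiff ℝ ∞ F) (hF0 : F 0 = 0)
    (k n : ℕ) : ∃ C, ∀ ε ∈ Icc (0 : ℝ) 1, ∀ f : 𝓢(V, ℝ), (∀ x, f x = χ x * F (ε • x)) →
      SchwartzMap.seminorm ℝ k n f ≤ ε * C := by
  obtain ⟨R, hR⟩ := hχc.isCompact.isBounded.subset_closedBall (0 : V)
  choose K hK using exists_norm_iteratedFDeriv_comp_smul_le hF hF0 R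
  choose M hM using fun i => (hχ.continuous_iteratedFDeriv (m := i)
    (mod_cast le_top)).bounded_above_of_compact_support (hχc.iteratedFDeriv i)
  have hM0 : ∀ i, 0 ≤ M i := fun i => (norm_nonneg _).trans (hM i 0)
  set S : ℝ := ∑ i ∈ Finset.range (n + 1), n.choose i * M i * |K (n - i)|
  have hS : 0 ≤ S := Finset.sum_nonneg fun i _ => by have := hM0 i; positivity
  refine ⟨|R| ^ k * S, fun ε hε f hf => ?_⟩
  have hε0 : 0 ≤ ε := hε.1
  refine seminorm_le_bound ℝ k n f (by positivity) fun x => ?_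
  have hfe : ⇑f = fun y => χ y * F (ε • y) := funext hf
  by_cases hx : x ∈ tsupport χ
  · have hxR := hR hx
    have hleibniz : ‖iteratedFDeriv ℝ n f x‖ ≤ ε * S := by
      rw [hfe, Finset.mul_sum]
      refine (norm_iteratedFDeriv_mul_le hχ (hF.comp (contDiff_const_smul ε)) x
        (mod_cast le_top)).trans (Finset.sum_le_sum fun i _ => ?_)
      calc _ ≤ n.choose i * M i * (ε * |K (n - i)|) := by
            gcongr
            · exact mul_nonneg (Nat.cast_nonneg _) (hM0 i)
            · exact hM i x
            · exact (hK (n - i) ε hε x hxR).trans (by gcongr; exact le_abs_self _)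
        _ = ε * (n.choose i * M i * |K (n - i)|) := by ring
    calc ‖x‖ ^ k * ‖iteratedFDeriv ℝ n f x‖ ≤ |R| ^ k * (ε * S) := by
          gcongr
          exact (mem_closedBall_zero_iff.1 hxR).trans (le_abs_self R)
      _ = ε * (|R| ^ k * S) := by ring
  · have hzero : iteratedFDeriv ℝ n f x = 0 := by
      by_contra hne
      have hxf : x ∈ tsupport f := support_iteratedFDeriv_subset n hne
      rw [hfe] at hxf
      exact hx (tsupport_mul_subset_left hxf)
    rw [hzero, norm_zero, mul_zero]
    positivity

lemma tendsto_mul_comp_smul [NormedSpace ℝ V] [FiniteDimensional ℝ V] {χ F : V → ℝ}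
    (hχ : ContDiff ℝ ∞ χ) (hχc : HasCompactSupport χ) (hF : ContDiff ℝ ∞ F) (hF0 : F 0 = 0)
    {f : ℝ → 𝓢(V, ℝ)} (hf : ∀ ε x, f ε x = χ x * F (ε • x)) : Tendsto f (𝓝[>] 0) (𝓝 0) := by
  rw [(schwartz_withSeminorms ℝ V ℝ).tendsto_nhds]
  rintro ⟨k, n⟩ δ hδ
  obtain ⟨C, hC⟩ := exists_seminorm_mul_comp_smul_le hχ hχc hF hF0 k n
  have hlim : Tendsto (fun ε : ℝ => ε * C) (𝓝[>] 0) (𝓝 0) := by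
    have hcont : Continuous fun ε : ℝ => ε * C := by fun_prop
    simpa only [zero_mul] using (hcont.tendsto 0).mono_left nhdsWithin_le_nhds
  filter_upwards [hlim.eventually (gt_mem_nhds hδ), Ioo_mem_nhdsGT (zero_lt_one (α := ℝ))] with
    ε hεδ hε
  rw [sub_zero]
  exact (hC ε (Ioo_subset_Icc_self hε) _ (hf ε)).trans_lt hεδ

variable {κ : Type*} [Fintype κ] [InnerProductSpace ℝ V] [FiniteDimensional ℝ V]
  [MeasurableSpace V] [BorelSpace V] {F : κ → V → ℝ} {δ : ℝ}

lemma exists_sumSeminorm_le_eqOn_comp_smul (hF : ∀ i, ContDiff ℝ ∞ (F i)) (hF0 : ∀ i, F i 0 = 0)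
    {R : ℝ} (hR : 0 < R) (hδ : 0 < δ) :
    ∃ ε > (0 : ℝ), ∃ f : κ → 𝓢(V, ℝ), sumSeminorm 0 0 f ≤ δ ∧
      ∀ x ∈ Metric.ball (0 : V) R, ∀ i, f i x = F i (ε • x) := by
  let χ : ContDiffBump (0 : V) := ⟨R, R + 1, hR, by linarith⟩
  choose f hf using fun (ε : ℝ) i => exists_schwartz_eq_mul isOpen_univ χ.contDiff
    χ.hasCompactSupport (subset_univ _) ((hF i).comp (contDiff_const_smul ε)).contDiffOn
  have hlim : Tendsto (fun ε => sumSeminorm 0 0 (f ε)) (𝓝[>] 0) (𝓝 0) := by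
    simp only [sumSeminorm_apply]
    have hsum := tendsto_finsetSum Finset.univ fun i (_ : i ∈ Finset.univ) =>
      ((continuous_wienerSeminorm (V := V) 2 0 0).tendsto 0).comp
        (tendsto_mul_comp_smul χ.contDiff χ.hasCompactSupport (hF i) (hF0 i) fun ε => hf ε i)
    simpa only [Function.comp_def, map_zero, Finset.sum_const_zero] using hsum
  obtain ⟨ε, hεδ, hε⟩ := ((hlim.eventually (ge_mem_nhds hδ)).and self_mem_nhdsWithin).exists
  refine ⟨ε, hε, f ε, hεδ, fun x hx i => ?_⟩
  rw [hf, χ.one_of_mem_closedBall (Metric.ball_subset_closedBall hx), one_mul]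
  rfl

/- Truncating `F i` at radius `ρ` is, by homogeneity, the dilation of a fixed Schwartz function
multiplied by `ρ ^ k`, while a dilation costs only `ρ ^ (-2)` in the seminorm of order `2`. -/
lemma exists_sumSeminorm_le_eqOn_of_homogeneous (hF : ∀ i, ContDiff ℝ ∞ (F i)) {k : ℕ} (hk : 2 < k)
    (hhom : ∀ i (c : ℝ) x, F i (c • x) = c ^ k * F i x) (hδ : 0 < δ) :
    ∃ ρ > 0, ∃ f : κ → 𝓢(V, ℝ), sumSeminorm 0 0 f ≤ δ ∧
      ∀ x ∈ Metric.ball (0 : V) ρ, ∀ i, f i x = F i x := by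
  let χ : ContDiffBump (0 : V) := ⟨1, 2, one_pos, one_lt_two⟩
  choose f hf using fun i => exists_schwartz_eq_mul isOpen_univ χ.contDiff
    χ.hasCompactSupport (subset_univ _) (hF i).contDiffOn
  set S : ℝ := sumSeminorm 0 0 f
  have : 0 ≤ S := apply_nonneg _ _
  obtain ⟨ρ, hρ0, hρ⟩ : ∃ ρ > 0, ρ ≤ min 1 (δ / (S + 1)) := ⟨_, by positivity, le_rfl⟩
  have hρ1 : ρ ≤ 1 := hρ.trans (min_le_left _ _)
  have hρS : ρ * S ≤ δ := by
    linarith [(le_div_iff₀ (by positivity)).1 (hρ.trans (min_le_right 1 (δ / (S + 1))))]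
  let f' : κ → 𝓢(V, ℝ) := fun i => compCLMOfContinuousLinearEquiv ℝ
    (ContinuousLinearEquiv.smulLeft (Units.mk0 ρ⁻¹ (inv_ne_zero hρ0.ne'))) (f i)
  have hf' : ∀ i x, f' i x = f i (ρ⁻¹ • x) := fun i x => rfl
  refine ⟨ρ, hρ0, ρ ^ k • f', ?_, fun x hx i => ?_⟩
  · calc sumSeminorm 0 0 (ρ ^ k • f') ≤ ρ ^ k * ((ρ ^ 2)⁻¹ * S) := by
          simp only [S, map_smul_eq_mul, Real.norm_of_nonneg (pow_nonneg hρ0.le k),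
            sumSeminorm_apply, Finset.mul_sum]
          gcongr with i
          exact wienerSeminorm_le_of_dilation 2 hρ0 hρ1 (hf' i)
      _ = ρ ^ (k - 2) * S := by rw [← mul_assoc, ← pow_sub₀ _ hρ0.ne' hk.le]
      _ ≤ ρ * S := by gcongr; exact pow_le_of_le_one hρ0.le hρ1 (by lia)
      _ ≤ δ := hρS
  · have hx1 : ρ⁻¹ • x ∈ Metric.closedBall (0 : V) 1 := by
      rw [mem_closedBall_zero_iff, norm_smul, norm_inv, Real.norm_of_nonneg hρ0.le,
        inv_mul_le_one₀ hρ0]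
      exact (mem_ball_zero_iff.1 hx).le
    change ρ ^ k * f' i x = F i x
    rw [hf', hf, χ.one_of_mem_closedBall hx1, one_mul, ← hhom, smul_inv_smul₀ hρ0.ne']

end Truncation

/-! ### A free map whose metric is constant up to fourth order -/

section FreeMap

variable {J : Type*}

/-- The indicator vector of the coordinates belonging to an unordered pair. -/
def pairVec [DecidableEq J] (κ : Sym2 J) (i : J) : ℝ := if i ∈ κ then 1 else 0

lemma pairVec_mul_pairVec [DecidableEq J] (κ : Sym2 J) {i j : J} (hij : i ≠ j) :
    pairVec κ i * pairVec κ j = if κ = s(i, j) then 1 else 0 := by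
  simp only [pairVec, ite_zero_mul_ite_zero, mul_one, Sym2.mem_and_mem_iff hij]

variable [Fintype J]

/-- The linear form with given coefficients on Euclidean space. -/
def coeffForm (c : J → ℝ) : EuclideanSpace ℝ J →L[ℝ] ℝ := innerSL ℝ (WithLp.toLp 2 c)

lemma hasFDerivAt_coeffForm_pow (c : J → ℝ) (n : ℕ) (x : EuclideanSpace ℝ J) :
    HasFDerivAt (fun y => coeffForm c y ^ n) ((n * coeffForm c x ^ (n - 1)) • coeffForm c) x := by
  simpa using (coeffForm c).hasFDerivAt.pow n

variable [DecidableEq J]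

lemma eq_zero_of_sum_pairVec_mul_eq_zero {z : Sym2 J → ℝ}
    (hz : ∀ i j, ∑ κ, pairVec κ i * pairVec κ j * z κ = 0) : z = 0 := by
  have offDiag (i j : J) (hij : i ≠ j) : z s(i, j) = 0 := by
    simpa only [pairVec_mul_pairVec _ hij, ite_mul, one_mul, zero_mul, Finset.sum_ite_eq',
      Finset.mem_univ, if_true] using hz i j
  ext κ
  induction κ with | _ i j
  obtain rfl | hij := eq_or_ne i j
  · have diag := hz i i
    rw [Finset.sum_eq_single s(i, i)] at diag
    · simpa [pairVec] using diag
    · intro κ _ hκ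
      induction κ with | _ k l
      obtain rfl | hkl := eq_or_ne k l
      · have : i ≠ k := fun h => hκ (by rw [h])
        simp [pairVec, this]
      · rw [offDiag k l hkl, mul_zero]
    · simp
  · exact offDiag i j hij

lemma coeffForm_single (c : J → ℝ) (i : J) : coeffForm c (EuclideanSpace.single i 1) = c i := by
  simp [coeffForm, EuclideanSpace.inner_single_right]

variable (A : Matrix J J ℝ)

/-- The coefficients of the cubic correction in `freeMap`, chosen such that the quadratic term it
contributes to the metric cancels the one of the components `ℓ_κ² / 2`. -/
def cubicCoeff (κ : Sym2 J) : J → ℝ := Aᵀ⁻¹ *ᵥ pairVec κ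

/-- A map `ℝᵈ → ℝᵈ × ℝ^(d(d+1)/2)`, given by `A x` up to cubic terms and by the squares
`ℓ_κ² / 2` of the forms `ℓ_κ = ∑ i ∈ κ, xᵢ`. It is free at the origin, and the metric it induces is
`Aᵀ A` up to terms of order four. -/
def freeMap : J ⊕ Sym2 J → EuclideanSpace ℝ J → ℝ
  | .inl a, x => coeffForm (A a) x -
      ∑ κ, cubicCoeff A κ a / 6 * coeffForm (pairVec κ) x ^ 3
  | .inr κ, x => 1 / 2 * coeffForm (pairVec κ) x ^ 2

/-- The partial derivative in direction `i` of the cubic terms of `freeMap A (.inl a)`. -/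
def cubicDeriv (a i : J) (x : EuclideanSpace ℝ J) : ℝ :=
  ∑ κ, cubicCoeff A κ a * pairVec κ i / 2 * coeffForm (pairVec κ) x ^ 2

/-- The deviation of the metric induced by `freeMap A` from the constant metric `Aᵀ A`. -/
def metricDefect (i j : J) (x : EuclideanSpace ℝ J) : ℝ :=
  ∑ a, cubicDeriv A a i x * cubicDeriv A a j x

lemma contDiff_freeMap (c : J ⊕ Sym2 J) : ContDiff ℝ ∞ (freeMap A c) := by
  cases c <;> unfold freeMap <;> fun_prop

lemma contDiff_metricDefect (i j : J) : ContDiff ℝ ∞ (metricDefect A i j) := by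
  unfold metricDefect cubicDeriv; fun_prop

lemma metricDefect_comm (i j : J) : metricDefect A i j = metricDefect A j i := by
  ext x
  simp only [metricDefect, mul_comm]

lemma metricDefect_smul (i j : J) (c : ℝ) (x : EuclideanSpace ℝ J) :
    metricDefect A i j (c • x) = c ^ 4 * metricDefect A i j x := by
  have cubicDeriv_smul (a i : J) : cubicDeriv A a i (c • x) = c ^ 2 * cubicDeriv A a i x := by
    simp only [cubicDeriv, map_smul, smul_eq_mul, mul_pow, Finset.mul_sum]
    exact Finset.sum_congr rfl fun κ _ => by ring
  simp only [metricDefect, cubicDeriv_smul, Finset.mul_sum]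
  exact Finset.sum_congr rfl fun a _ => by ring

lemma fderiv_freeMap_inl (a i : J) (x : EuclideanSpace ℝ J) :
    fderiv ℝ (freeMap A (.inl a)) x (EuclideanSpace.single i 1) = A a i - cubicDeriv A a i x := by
  have deriv : HasFDerivAt (freeMap A (.inl a)) _ x :=
    (coeffForm (A a)).hasFDerivAt.sub (HasFDerivAt.fun_sum (u := Finset.univ) fun κ _ =>
      (hasFDerivAt_coeffForm_pow (pairVec κ) 3 x).const_mul (cubicCoeff A κ a / 6))
  simp only [deriv.fderiv, _root_.sub_apply, _root_.sum_apply, _root_.smul_apply, coeffForm_single,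
    smul_eq_mul, cubicDeriv]
  congr 1
  exact Finset.sum_congr rfl fun κ _ => by push_cast; ring

lemma fderiv_freeMap_inr (κ : Sym2 J) (i : J) (x : EuclideanSpace ℝ J) :
    fderiv ℝ (freeMap A (.inr κ)) x (EuclideanSpace.single i 1) =
      pairVec κ i * coeffForm (pairVec κ) x := by
  have deriv : HasFDerivAt (freeMap A (.inr κ)) _ x :=
    (hasFDerivAt_coeffForm_pow (pairVec κ) 2 x).const_mul (1 / 2)
  simp only [deriv.fderiv, _root_.smul_apply, coeffForm_single, smul_eq_mul]
  push_cast
  ring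

lemma fderiv_cubicDeriv_zero (a i : J) : fderiv ℝ (cubicDeriv A a i) 0 = 0 := by
  have deriv : HasFDerivAt (cubicDeriv A a i) _ 0 :=
    HasFDerivAt.fun_sum (u := Finset.univ) fun κ _ =>
      (hasFDerivAt_coeffForm_pow (pairVec κ) 2 0).const_mul (cubicCoeff A κ a * pairVec κ i / 2)
  simp [deriv.fderiv]

variable {A}

lemma sum_mul_cubicDeriv (hA : IsUnit A.det) (i j : J) (x : EuclideanSpace ℝ J) :
    ∑ a, A a i * cubicDeriv A a j x =
      1 / 2 * ∑ κ, pairVec κ i * pairVec κ j * coeffForm (pairVec κ) x ^ 2 := by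
  have sum_mul_cubicCoeff (κ : Sym2 J) : ∑ a, A a i * cubicCoeff A κ a = pairVec κ i := by
    have hA' : IsUnit Aᵀ.det := by rwa [Matrix.det_transpose]
    change (Aᵀ *ᵥ (Aᵀ⁻¹ *ᵥ pairVec κ)) i = _
    rw [Matrix.mulVec_mulVec, Matrix.mul_nonsing_inv _ hA', Matrix.one_mulVec]
  simp only [cubicDeriv, Finset.mul_sum]
  rw [Finset.sum_comm]
  refine Finset.sum_congr rfl fun κ _ => ?_
  rw [← sum_mul_cubicCoeff κ, Finset.sum_mul, Finset.sum_mul, Finset.mul_sum]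
  exact Finset.sum_congr rfl fun a _ => by ring

lemma gradientGram_freeMap (hA : IsUnit A.det) (i j : J) (x : EuclideanSpace ℝ J) :
    gradientGram (EuclideanSpace.single · 1) (freeMap A) (freeMap A) x i j =
      (Aᵀ * A) i j + metricDefect A i j x := by
  have sum_inl : ∑ a, (A a i - cubicDeriv A a i x) * (A a j - cubicDeriv A a j x) =
      (Aᵀ * A) i j - ∑ a, A a i * cubicDeriv A a j x - ∑ a, A a j * cubicDeriv A a i x +
        metricDefect A i j x := by
    simp only [Matrix.mul_apply, Matrix.transpose_apply, metricDefect, ← Finset.sum_sub_distrib,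
      ← Finset.sum_add_distrib]
    exact Finset.sum_congr rfl fun a _ => by ring
  have sum_inr : ∑ κ : Sym2 J, pairVec κ i * coeffForm (pairVec κ) x *
        (pairVec κ j * coeffForm (pairVec κ) x) =
      ∑ κ : Sym2 J, pairVec κ i * pairVec κ j * coeffForm (pairVec κ) x ^ 2 :=
    Finset.sum_congr rfl fun κ _ => by ring
  simp only [gradientGram, Fintype.sum_sum_type, fderiv_freeMap_inl, fderiv_freeMap_inr]
  rw [sum_inl, sum_inr, sum_mul_cubicDeriv hA, sum_mul_cubicDeriv hA]
  simp only [mul_comm (pairVec _ j)]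
  ring

lemma det_jetMatrix_freeMap_zero_ne_zero (hA : IsUnit A.det) :
    (jetMatrix (EuclideanSpace.single · 1) (freeMap A) 0).det ≠ 0 := by
  rw [Ne, ← Matrix.exists_mulVec_eq_zero_iff]
  rintro ⟨z, z_ne_zero, hz⟩
  have z_inl : (fun a => z (.inl a)) = 0 := by
    refine Matrix.eq_zero_of_mulVec_eq_zero (M := Aᵀ) ?_ (funext fun i => ?_)
    · rw [Matrix.det_transpose]; exact hA.ne_zero
    · simpa [Matrix.mulVec, dotProduct, jetMatrix, fderiv_freeMap_inl, fderiv_freeMap_inr,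
        cubicDeriv] using congrFun hz (.inl i)
  have z_inr : (fun κ => z (.inr κ)) = 0 := by
    refine eq_zero_of_sum_pairVec_mul_eq_zero fun i j => ?_
    have jet_inr (c : J ⊕ Sym2 J) := jetMatrix_inr (EuclideanSpace.single · (1 : ℝ))
      (contDiff_infty.1 (contDiff_freeMap A c) 2).contDiffAt (x := 0) i j
    have fderiv_inl (a : J) : fderiv ℝ (fun y => A a i - cubicDeriv A a i y) 0 = 0 := by
      rw [fderiv_const_sub, fderiv_cubicDeriv_zero, neg_zero]
    have fderiv_inr (κ : Sym2 J) : fderiv ℝ (fun y => pairVec κ i * coeffForm (pairVec κ) y) 0 =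
        pairVec κ i • coeffForm (pairVec κ) :=
      ((coeffForm (pairVec κ)).hasFDerivAt.const_mul _).fderiv
    simpa [Matrix.mulVec, dotProduct, jet_inr, fderiv_freeMap_inl, fderiv_freeMap_inr,
      fderiv_inl, fderiv_inr, coeffForm_single] using congrFun hz (.inr s(i, j))
  exact z_ne_zero (funext (Sum.rec (congrFun z_inl) (congrFun z_inr)))

end FreeMap

/-! ### Prescribing a metric near a point -/

section PrescribedMetric

variable {J : Type*}

lemma contDiff_jetMatrix_apply {V ι : Type*} [NormedAddCommGroup V] [NormedSpace ℝ V] (b : J → V)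
    {u : ι → V → ℝ} {a : ι} (hu : ContDiff ℝ ∞ (u a)) (κ : J ⊕ Sym2 J) :
    ContDiff ℝ ∞ fun x => jetMatrix b u x κ a := by
  have contDiff_deriv {f : V → ℝ} (hf : ContDiff ℝ ∞ f) (m : V) :
      ContDiff ℝ ∞ fun x => fderiv ℝ f x m := (hf.fderiv_right le_rfl).clm_apply contDiff_const
  obtain i | κ := κ
  · exact contDiff_deriv hu (b i)
  · induction κ with | _ i j
    simp only [jetMatrix_inr b (contDiff_infty.1 hu 2).contDiffAt]
    exact contDiff_deriv (contDiff_deriv hu (b i)) (b j)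

lemma gradientGram_rescale {V ι : Type*} [NormedAddCommGroup V] [NormedSpace ℝ V] [Fintype ι]
    (b : J → V) (w : ι → V → ℝ) {ε : ℝ} (hε : ε ≠ 0) (p x : V) (i j : J) :
    gradientGram b (fun a y => ε * w a (ε⁻¹ • (y - p))) (fun a y => ε * w a (ε⁻¹ • (y - p)))
      x i j = gradientGram b w w (ε⁻¹ • (x - p)) i j := by
  have fderiv_rescale (a : ι) :
      fderiv ℝ (fun y => ε * w a (ε⁻¹ • (y - p))) x = fderiv ℝ (w a) (ε⁻¹ • (x - p)) := by
    change fderiv ℝ (ε • fun y => w a (ε⁻¹ • (y - p))) x = _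
    rw [fderiv_const_smul_field, Pi.smul_apply, fderiv_comp_sub (f := fun y => w a (ε⁻¹ • y)),
      fderiv_comp_smul, smul_inv_smul₀ hε]
  simp only [gradientGram, fderiv_rescale]

variable [Fintype J] [DecidableEq J] {A : Matrix J J ℝ}

lemma exists_gradientGram_eq_add (hA : IsUnit A.det) :
    ∃ δ > 0, ∃ R > 0, ∀ h : Sym2 J → 𝓢(EuclideanSpace ℝ J, ℝ), sumSeminorm 0 0 h ≤ δ →
      ∃ w : J ⊕ Sym2 J → EuclideanSpace ℝ J → ℝ, (∀ c, ContDiff ℝ ∞ (w c)) ∧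
        ∀ x ∈ Metric.ball 0 R, ∀ i j, gradientGram (EuclideanSpace.single · 1) w w x i j =
          (Aᵀ * A) i j + h s(i, j) x := by
  obtain ⟨r, hr, E, hE⟩ := exists_schwartz_rightInverse
    (fun κ c => contDiff_jetMatrix_apply _ (contDiff_freeMap A c) κ)
    (det_jetMatrix_freeMap_zero_ne_zero hA)
  obtain ⟨δ, hδ, perturb⟩ := exists_gradientGram_add_eq
    (fun c => contDiff_infty.1 (contDiff_freeMap A c) 2) Metric.isOpen_ball hE
  obtain ⟨ρ, hρ, m, hmδ, hm⟩ := exists_sumSeminorm_le_eqOn_of_homogeneous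
    (F := Sym2.lift ⟨metricDefect A, metricDefect_comm A⟩)
    (Sym2.ind (contDiff_metricDefect A)) (k := 4) (by norm_num)
    (Sym2.ind (metricDefect_smul A)) (half_pos hδ)
  refine ⟨δ / 2, half_pos hδ, min r ρ, lt_min hr hρ, fun h hh => ?_⟩
  obtain ⟨v, hv, hv_eq⟩ := perturb (h - m)
    ((map_sub_le_add _ h m).trans ((add_le_add hh hmδ).trans_eq (add_halves δ)))
  refine ⟨freeMap A + v, fun c => (contDiff_freeMap A c).add (hv c), fun x hx i j => ?_⟩
  rw [hv_eq x (Metric.ball_subset_ball (min_le_left r ρ) hx), gradientGram_freeMap hA]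
  have hmx : m s(i, j) x = metricDefect A i j x :=
    hm x (Metric.ball_subset_ball (min_le_right r ρ) hx) s(i, j)
  rw [Pi.sub_apply, _root_.sub_apply, hmx]
  ring

lemma exists_gradientGram_eq_add_comp_smul (hA : IsUnit A.det)
    {H : Sym2 J → EuclideanSpace ℝ J → ℝ} (hH : ∀ κ, ContDiff ℝ ∞ (H κ)) (hH0 : ∀ κ, H κ 0 = 0) :
    ∃ ε > (0 : ℝ), ∃ R > 0, ∃ w : J ⊕ Sym2 J → EuclideanSpace ℝ J → ℝ,
      (∀ c, ContDiff ℝ ∞ (w c)) ∧ ∀ x ∈ Metric.ball 0 R, ∀ i j,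
        gradientGram (EuclideanSpace.single · 1) w w x i j =
          (Aᵀ * A) i j + H s(i, j) (ε • x) := by
  obtain ⟨δ, hδ, R, hR, solve⟩ := exists_gradientGram_eq_add hA
  obtain ⟨ε, hε, f, hfδ, hf⟩ := exists_sumSeminorm_le_eqOn_comp_smul hH hH0 hR hδ
  obtain ⟨w, hw, hw_eq⟩ := solve f hfδ
  exact ⟨ε, hε, R, hR, w, hw, fun x hx i j => by rw [hw_eq x hx, hf x hx]⟩

open scoped MatrixOrder in
lemma exists_transpose_mul_self_eq {G : Matrix J J ℝ} (hG : G.PosDef) :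
    ∃ A : Matrix J J ℝ, IsUnit A.det ∧ Aᵀ * A = G := by
  obtain ⟨A, hA⟩ := CStarAlgebra.nonneg_iff_eq_star_mul_self.1 hG.posSemidef.nonneg
  rw [Matrix.star_eq_conjTranspose, Matrix.conjTranspose_eq_transpose_of_trivial] at hA
  refine ⟨A, IsUnit.mk0 _ fun det_zero => hG.det_pos.ne' ?_, hA.symm⟩
  rw [hA, Matrix.det_mul, det_zero, mul_zero]

theorem exists_gradientGram_eq_metric {Ω : Set (EuclideanSpace ℝ J)} (hΩ : IsOpen Ω)
    {p : EuclideanSpace ℝ J} (hp : p ∈ Ω) {g : EuclideanSpace ℝ J → Matrix J J ℝ}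
    (hg : ContDiffOn ℝ ∞ g Ω) (hsymm : ∀ x ∈ Ω, (g x).IsSymm) (hpos : (g p).PosDef) :
    ∃ ρ > 0, Metric.ball p ρ ⊆ Ω ∧ ∃ w : J ⊕ Sym2 J → EuclideanSpace ℝ J → ℝ,
      (∀ c, ContDiff ℝ ∞ (w c)) ∧ ∀ x ∈ Metric.ball p ρ, ∀ i j,
        gradientGram (EuclideanSpace.single · 1) w w x i j = g x i j := by
  obtain ⟨A, hA, hAg⟩ := exists_transpose_mul_self_eq hpos
  obtain ⟨r, hr, hrΩ, hcut⟩ := exists_schwartz_eqOn_ball hΩ hp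
  let G : Sym2 J → EuclideanSpace ℝ J → ℝ := symmetrize fun i j x => g x i j
  have G_mk (i j : J) {x : EuclideanSpace ℝ J} (hx : x ∈ Ω) : G s(i, j) x = g x i j := by
    change (1 / 2 : ℝ) • (g x i j + g x j i) = g x i j
    rw [(hsymm x hx).apply, ← two_smul ℝ, smul_smul]
    norm_num
  have G_smooth (κ : Sym2 J) : ContDiffOn ℝ ∞ (G κ) Ω := by
    induction κ with | _ i j
    exact (contDiffOn_pi.1 (contDiffOn_pi.1 hg i) j).congr fun x hx => G_mk i j hx
  choose φ hφ using fun κ => hcut _ (G_smooth κ)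
  obtain ⟨ε, hε, R, hR, w, hw, hw_eq⟩ := exists_gradientGram_eq_add_comp_smul hA
    (H := fun κ y => φ κ (p + y) - G κ p)
    (fun κ => by have := (φ κ).smooth ⊤; fun_prop)
    (fun κ => by rw [add_zero, hφ κ p (Metric.mem_ball_self hr), sub_self])
  refine ⟨min r (ε * R), by positivity, (Metric.ball_subset_ball (min_le_left _ _)).trans hrΩ,
    fun c y => ε * w c (ε⁻¹ • (y - p)), fun c => ?_, fun x hx i j => ?_⟩
  · have := hw c
    fun_prop
  have hxr : x ∈ Metric.ball p r := Metric.ball_subset_ball (min_le_left _ _) hx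
  have hxR : ε⁻¹ • (x - p) ∈ Metric.ball (0 : EuclideanSpace ℝ J) R := by
    rw [mem_ball_zero_iff, norm_smul, norm_inv, Real.norm_of_nonneg hε.le, inv_mul_lt_iff₀ hε,
      ← dist_eq_norm]
    exact (Metric.mem_ball.1 hx).trans_le (min_le_right _ _)
  rw [gradientGram_rescale _ _ hε.ne', hw_eq _ hxR, hAg, smul_inv_smul₀ hε.ne',
    add_sub_cancel, hφ _ x hxr, G_mk i j (hrΩ hxr), G_mk i j hp, add_sub_cancel]

end PrescribedMetric

/-! ### Assembling the immersion -/

section Assembly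

lemma exists_isOpen_injOn {E F : Type*} [NormedAddCommGroup E] [NormedSpace ℝ E]
    [FiniteDimensional ℝ E] [NormedAddCommGroup F] [NormedSpace ℝ F] [FiniteDimensional ℝ F]
    {u : E → F} {u' : E →L[ℝ] F} {p : E} (hu : HasStrictFDerivAt u u' p)
    (hinj : Function.Injective u') : ∃ U : Set E, IsOpen U ∧ p ∈ U ∧ InjOn u U := by
  have := FiniteDimensional.complete ℝ E
  obtain ⟨L, hL⟩ := (u' : E →ₗ[ℝ] F).exists_leftInverse_of_injective
    (LinearMap.ker_eq_bot.2 hinj)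
  have hcomp : HasStrictFDerivAt (fun x => L.toContinuousLinearMap (u x))
      (ContinuousLinearEquiv.refl ℝ E : E →L[ℝ] E) p := by
    convert L.toContinuousLinearMap.hasStrictFDerivAt.comp p hu using 1
    ext x
    exact (LinearMap.congr_fun hL x).symm
  let Φ := hcomp.toOpenPartialHomeomorph _
  exact ⟨Φ.source, Φ.open_source, hcomp.mem_toOpenPartialHomeomorph_source,
    fun x hx y hy hxy => Φ.injOn hx hy (congrArg L.toContinuousLinearMap hxy)⟩

variable {d n : ℕ} {u : EuclideanSpace ℝ (Fin d) → EuclideanSpace ℝ (Fin n)}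
  {x : EuclideanSpace ℝ (Fin d)}

lemma Jac_mulVec (v : EuclideanSpace ℝ (Fin d)) : Jac u x *ᵥ v.ofLp = (fderiv ℝ u x v).ofLp := by
  ext k
  conv_rhs => rw [← (EuclideanSpace.basisFun (Fin d) ℝ).sum_repr v]
  simp [Jac, Matrix.mulVec, dotProduct, mul_comm]

lemma injective_fderiv_of_posDef (h : ((Jac u x)ᵀ * Jac u x).PosDef) :
    Function.Injective (fderiv ℝ u x) := by
  refine (injective_iff_map_eq_zero _).2 fun v hv => ?_
  have mulVec_eq_zero : ((Jac u x)ᵀ * Jac u x) *ᵥ v.ofLp = 0 := by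
    rw [← Matrix.mulVec_mulVec, Jac_mulVec, hv, WithLp.ofLp_zero, Matrix.mulVec_zero]
  exact (WithLp.ofLp_eq_zero 2).1 (Matrix.eq_zero_of_mulVec_eq_zero h.det_pos.ne' mulVec_eq_zero)

lemma transpose_Jac_mul_Jac_toLp {κ : Type*} [Fintype κ] {w : κ → EuclideanSpace ℝ (Fin d) → ℝ}
    (hw : ∀ c, DifferentiableAt ℝ (w c) x) (e : Fin n ≃ κ) (i j : Fin d) :
    ((Jac (fun y => WithLp.toLp 2 fun k => w (e k) y) x)ᵀ *
      Jac (fun y => WithLp.toLp 2 fun k => w (e k) y) x) i j =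
      gradientGram (EuclideanSpace.single · 1) w w x i j := by
  have Jac_apply (k : Fin n) (l : Fin d) :
      Jac (fun y => WithLp.toLp 2 fun k => w (e k) y) x k l =
        fderiv ℝ (w (e k)) x (EuclideanSpace.single l 1) := by
    have hu : DifferentiableAt ℝ (fun y => WithLp.toLp 2 fun k => w (e k) y) x :=
      differentiableAt_euclidean.2 fun k => hw (e k)
    have coord := (EuclideanSpace.proj (𝕜 := ℝ) k).hasFDerivAt.comp x hu.hasFDerivAt
    exact DFunLike.congr_fun coord.fderiv.symm (EuclideanSpace.single l 1)
  simp only [Matrix.mul_apply, Matrix.transpose_apply, Jac_apply]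
  exact e.sum_comp fun c => fderiv ℝ (w c) x (EuclideanSpace.single i 1) *
    fderiv ℝ (w c) x (EuclideanSpace.single j 1)

lemma card_sum_sym2_fin (d : ℕ) :
    Fintype.card (Fin d ⊕ Sym2 (Fin d)) = d * (d + 1) / 2 + d := by
  rw [Fintype.card_sum, Sym2.card, Fintype.card_fin, Nat.choose_two_right, mul_comm (d + 1),
    Nat.add_sub_cancel, mul_comm, add_comm]

end Assembly

end LocalIsometry

open LocalIsometry

/-- **Gromov–Rokhlin; Greene (1970).** Every smooth Riemannian metric on an open subset
of `ℝᵈ` admits, near any point, a smooth local isometric embedding into `ℝ^{s_d + d}`,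
where `s_d = d(d+1)/2` is the Janet dimension. -/
theorem gromov_rokhlin_greene (d : ℕ) (hd : 1 ≤ d)
    (Ω : Set (EuclideanSpace ℝ (Fin d))) (hΩ : IsOpen Ω)
    (p : EuclideanSpace ℝ (Fin d)) (hp : p ∈ Ω)
    (g : EuclideanSpace ℝ (Fin d) → Matrix (Fin d) (Fin d) ℝ)
    (hg_smooth : ContDiffOn ℝ (⊤ : ℕ∞) g Ω)
    (hg_met : ∀ x ∈ Ω, (g x).IsSymm ∧ (g x).PosDef) :
    ∃ U : Set (EuclideanSpace ℝ (Fin d)), IsOpen U ∧ p ∈ U ∧ U ⊆ Ω ∧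
      ∃ u : EuclideanSpace ℝ (Fin d) → EuclideanSpace ℝ (Fin (d * (d + 1) / 2 + d)),
        ContDiffOn ℝ (⊤ : ℕ∞) u U ∧ Set.InjOn u U ∧
        ∀ x ∈ U, (Jac u x)ᵀ * Jac u x = g x := by
  obtain ⟨ρ, hρ, hρΩ, w, hw, w_metric⟩ := exists_gradientGram_eq_metric hΩ hp hg_smooth
    (fun x hx => (hg_met x hx).1) (hg_met p hp).2
  let e := (Fintype.equivFinOfCardEq (card_sum_sym2_fin d)).symm
  let u (x : EuclideanSpace ℝ (Fin d)) : EuclideanSpace ℝ (Fin (d * (d + 1) / 2 + d)) :=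
    WithLp.toLp 2 fun k => w (e k) x
  have u_smooth : ContDiff ℝ (⊤ : ℕ∞) u := contDiff_euclidean.2 fun k => hw (e k)
  have u_isometric (x) (hx : x ∈ Metric.ball p ρ) : (Jac u x)ᵀ * Jac u x = g x := by
    ext i j
    have w_differentiable (c) : DifferentiableAt ℝ (w c) x :=
      (hw c).contDiffAt.differentiableAt (by simp)
    rw [transpose_Jac_mul_Jac_toLp w_differentiable, w_metric x hx]
  have p_mem : p ∈ Metric.ball p ρ := Metric.mem_ball_self hρ
  have fderiv_injective : Function.Injective (fderiv ℝ u p) :=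
    injective_fderiv_of_posDef (u_isometric p p_mem ▸ (hg_met p hp).2)
  obtain ⟨V, hV, hpV, u_inj⟩ := exists_isOpen_injOn
    (u_smooth.contDiffAt.hasStrictFDerivAt (by simp)) fderiv_injective
  exact ⟨V ∩ Metric.ball p ρ, hV.inter Metric.isOpen_ball, ⟨hpV, p_mem⟩,
    inter_subset_right.trans hρΩ, u, u_smooth.contDiffOn, u_inj.mono inter_subset_left,
    fun x hx => u_isometric x hx.2⟩
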